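/- arXiv:2505.02782 — 3 statements merged into one kernel-verified Lean document; each statement's English description precedes it below -/
import Mathlib

section
/- Let 1 ≤ p ≤ 2 and Ω a measure space. There is a constant C_p such that for any finitely many f_1,…,f_N ∈ L^p(Ω): C_p^{-1}(Σ_j ‖f_j‖_p²)^{1/2} ≤ ∫_0^1 ‖Σ_j r_j(t) f_j‖_p dt ≤ C_p (Σ_j ‖f_j‖_p^p)^{1/p}. -/
open MeasureTheory

/-- The Rademacher functions `r_n(t) = sign (sin (2^n π t))`. -/
noncomputable def rademacher (n : ℕ) (t : ℝ) : ℝ :=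
  Real.sign (Real.sin (2 ^ n * Real.pi * t))

/-!
The vector `(r_1, …, r_n)` is uniformly distributed on `{-1, 1}ⁿ`, so the integral is the average of
`‖∑ ε_j f_j‖_p` over all signs.

Type `p`: integrating the scalar inequality `|a + b|^p + |a - b|^p ≤ 2 (|a|^p + |b|^p)` gives the
same two-point inequality for the norm of `L^p`; applied to one sign at a time it bounds the average
of `‖∑ ε_j f_j‖_p^p`, and Jensen's inequality concludes.

Cotype `2`: by Khintchine's inequality, which follows by comparing second and fourth moments,
`(∑ |f_j(x)|²)^{1/2}` is at most `√3` times the average of `|∑ ε_j f_j(x)|`. Take `L^p` norms: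
Minkowski's inequality bounds the left side below by `(∑ ‖f_j‖_p²)^{1/2}`, and the triangle
inequality bounds the right side above by `√3` times the average of `‖∑ ε_j f_j‖_p`.
-/

open Finset
open scoped BigOperators ENNReal

section Rademacher

lemma rademacher_succ (n : ℕ) (t : ℝ) : rademacher (n + 1) t = rademacher n (2 * t) := by
  simp only [rademacher]
  ring_nf

lemma rademacher_succ_sub_one (n : ℕ) (t : ℝ) :
    rademacher (n + 1) (t - 1) = rademacher (n + 1) t := by
  have hperiod : 2 ^ (n + 1) * Real.pi * (t - 1) =
      2 ^ (n + 1) * Real.pi * t - (2 ^ n : ℕ) * (2 * Real.pi) := by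
    push_cast
    ring
  rw [rademacher, hperiod, Real.sin_sub_nat_mul_two_pi, rademacher]

lemma rademacher_one_of_lt_half {t : ℝ} (h0 : 0 < t) (h1 : t < 1 / 2) : rademacher 1 t = 1 :=
  Real.sign_of_pos <| Real.sin_pos_of_pos_of_lt_pi (by positivity) (by nlinarith [Real.pi_pos])

lemma rademacher_one_of_half_lt {t : ℝ} (h0 : 1 / 2 < t) (h1 : t < 1) : rademacher 1 t = -1 := by
  refine Real.sign_of_neg ?_
  rw [← Real.sin_sub_two_pi]
  exact Real.sin_neg_of_neg_of_neg_pi_lt (by nlinarith [Real.pi_pos]) (by nlinarith [Real.pi_pos])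

/-- The random vector `(r_1, …, r_n)` on `[0, 1]`; its coordinates are indexed from `0`, so that
coordinate `j` is `r_{j+1}`. -/
noncomputable def rademacherVec (n : ℕ) (t : ℝ) : Fin n → ℝ := fun j ↦ rademacher (j + 1) t

lemma rademacherVec_succ (n : ℕ) (t : ℝ) :
    rademacherVec (n + 1) t = Fin.cons (rademacher 1 t) (rademacherVec n (2 * t)) := by
  funext j
  cases j using Fin.cases with
  | zero => simp [rademacherVec]
  | succ i => simp [rademacherVec, rademacher_succ (i + 1)]

lemma rademacherVec_sub_one (n : ℕ) (t : ℝ) : rademacherVec n (t - 1) = rademacherVec n t :=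
  funext fun _ ↦ rademacher_succ_sub_one _ _

lemma intervalIntegrable_and_integral_of_eq_on_halves {E : Type*} [NormedAddCommGroup E]
    [NormedSpace ℝ E] {g g₀ g₁ : ℝ → E} (hg₀ : IntervalIntegrable g₀ volume 0 1)
    (hg₁ : IntervalIntegrable g₁ volume 0 1)
    (h₀ : ∀ t ∈ Set.Ioo 0 (1 / 2), g t = g₀ (2 * t))
    (h₁ : ∀ t ∈ Set.Ioo (1 / 2) 1, g t = g₁ (2 * t - 1)) :
    IntervalIntegrable g volume 0 1 ∧
      ∫ t in 0..1, g t = (2 : ℝ)⁻¹ • ((∫ t in 0..1, g₀ t) + ∫ t in 0..1, g₁ t) := by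
  have hleft : IntervalIntegrable g volume 0 (1 / 2) := by
    have hcomp : IntervalIntegrable (fun t ↦ g₀ (2 * t)) volume 0 (1 / 2) := by
      simpa using hg₀.comp_mul_left (c := 2)
    refine hcomp.congr_uIoo fun t ht ↦ (h₀ t ?_).symm
    rwa [Set.uIoo_of_le (by norm_num)] at ht
  have hright : IntervalIntegrable g volume (1 / 2) 1 := by
    have hcomp : IntervalIntegrable (fun t ↦ g₁ (2 * t - 1)) volume (1 / 2) 1 := by
      simpa [show (1 + 1 : ℝ) / 2 = 1 by norm_num] using
        (hg₁.comp_sub_right 1).comp_mul_left (c := 2)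
    refine hcomp.congr_uIoo fun t ht ↦ (h₁ t ?_).symm
    rwa [Set.uIoo_of_le (by norm_num)] at ht
  refine ⟨hleft.trans hright, ?_⟩
  rw [← intervalIntegral.integral_add_adjacent_intervals hleft hright,
    intervalIntegral.integral_congr_Ioo_of_le (by norm_num) h₀,
    intervalIntegral.integral_congr_Ioo_of_le (by norm_num) h₁,
    intervalIntegral.integral_comp_mul_left g₀ two_ne_zero,
    intervalIntegral.integral_comp_mul_sub g₁ two_ne_zero, smul_add]
  norm_num

lemma expect_sign_cons {n : ℕ} (Φ : (Fin (n + 1) → ℤˣ) → ℝ) :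
    𝔼 ε, Φ ε = 2⁻¹ * ((𝔼 ε, Φ (Fin.cons 1 ε)) + 𝔼 ε, Φ (Fin.cons (-1) ε)) := by
  rw [← Fintype.expect_equiv (Fin.consEquiv fun _ ↦ ℤˣ) (fun x ↦ Φ (Fin.cons x.1 x.2)) Φ
    fun _ ↦ rfl, ← univ_product_univ, expect_product, Fintype.expect_eq_sum_div_card]
  simp only [UnitsInt.univ, mem_singleton, units_ne_neg_self, not_false_eq_true, sum_insert,
    sum_singleton, Fintype.card_units_int, Nat.cast_ofNat]
  ring

lemma intervalIntegrable_and_integral_rademacherVec {n : ℕ} (F : (Fin n → ℝ) → ℝ) :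
    IntervalIntegrable (fun t ↦ F (rademacherVec n t)) volume 0 1 ∧
      ∫ t in 0..1, F (rademacherVec n t) = 𝔼 ε : Fin n → ℤˣ, F fun j ↦ ((ε j : ℤ) : ℝ) := by
  induction n with
  | zero =>
    obtain ⟨c, rfl⟩ : ∃ c, F = fun _ ↦ c := ⟨F 0, funext fun v ↦ congrArg F (Subsingleton.elim v 0)⟩
    simp
  | succ n ih =>
    obtain ⟨hint₀, heq₀⟩ := ih fun v ↦ F (Fin.cons 1 v)
    obtain ⟨hint₁, heq₁⟩ := ih fun v ↦ F (Fin.cons (-1) v)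
    obtain ⟨hint, heq⟩ := intervalIntegrable_and_integral_of_eq_on_halves
      (g := fun t ↦ F (rademacherVec (n + 1) t)) hint₀ hint₁
      (fun t ht ↦ by rw [rademacherVec_succ, rademacher_one_of_lt_half ht.1 ht.2])
      (fun t ht ↦ by
        rw [rademacherVec_succ, rademacher_one_of_half_lt ht.1 ht.2, rademacherVec_sub_one])
    have hcons (u : ℤˣ) (ε : Fin n → ℤˣ) :
        (fun j ↦ (((Fin.cons u ε : Fin (n + 1) → ℤˣ) j : ℤ) : ℝ)) =
          Fin.cons ((u : ℤ) : ℝ) fun j ↦ ((ε j : ℤ) : ℝ) := by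
      funext j
      cases j using Fin.cases <;> simp
    refine ⟨hint, ?_⟩
    rw [heq, heq₀, heq₁, expect_sign_cons]
    simp [hcons]

lemma integral_norm_sum_rademacher_smul {V : Type*} [SeminormedAddCommGroup V] [NormedSpace ℝ V]
    {n : ℕ} (f : Fin n → V) :
    ∫ t in Set.Icc (0 : ℝ) 1, ‖∑ j, rademacher (j.1 + 1) t • f j‖ =
      𝔼 ε : Fin n → ℤˣ, ‖∑ j, ε j • f j‖ := by
  rw [integral_Icc_eq_integral_Ioc, ← intervalIntegral.integral_of_le zero_le_one]
  refine ((intervalIntegrable_and_integral_rademacherVec fun v ↦ ‖∑ j, v j • f j‖).2).trans ?_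
  simp only [Int.cast_smul_eq_zsmul, Units.smul_def]

end Rademacher

section SignAverages

variable {ι : Type*} [Fintype ι] [DecidableEq ι]

lemma expect_sum_insert_sign_smul {V : Type*} [AddCommGroup V] (Φ : V → ℝ) (f : ι → V)
    {s : Finset ι} {i : ι} (hi : i ∉ s) :
    𝔼 ε : ι → ℤˣ, Φ (∑ j ∈ insert i s, ε j • f j) =
      2⁻¹ * 𝔼 ε : ι → ℤˣ, (Φ (∑ j ∈ s, ε j • f j + f i) + Φ (∑ j ∈ s, ε j • f j - f i)) := by
  have hflip : 𝔼 ε : ι → ℤˣ, Φ (∑ j ∈ s, ε j • f j + ε i • f i) =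
      𝔼 ε : ι → ℤˣ, Φ (∑ j ∈ s, ε j • f j - ε i • f i) := by
    refine Fintype.expect_equiv (Equiv.mulRight (Pi.mulSingle i (-1))) _ _ fun ε ↦ ?_
    have hs : ∀ j ∈ s, (ε * Pi.mulSingle i (-1) : ι → ℤˣ) j • f j = ε j • f j := fun j hj ↦ by
      simp [ne_of_mem_of_not_mem hj hi]
    rw [Equiv.coe_mulRight, sum_congr rfl hs]
    simp [Units.smul_def]
  have hpair (ε : ι → ℤˣ) :
      Φ (∑ j ∈ s, ε j • f j + ε i • f i) + Φ (∑ j ∈ s, ε j • f j - ε i • f i) =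
        Φ (∑ j ∈ s, ε j • f j + f i) + Φ (∑ j ∈ s, ε j • f j - f i) := by
    rcases Int.units_eq_one_or (ε i) with h | h
    · simp [h]
    · rw [h, Units.neg_smul, one_smul, sub_neg_eq_add, ← sub_eq_add_neg, add_comm]
  simp only [sum_insert hi, add_comm (_ • f i), ← hpair, expect_add_distrib, ← hflip]
  ring

lemma expect_sum_sign_smul_le_of_add_sub_le {V : Type*} [AddCommGroup V] {Φ : V → ℝ}
    (h0 : Φ 0 = 0) (hΦ : ∀ x y, Φ (x + y) + Φ (x - y) ≤ 2 * (Φ x + Φ y)) (f : ι → V)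
    (s : Finset ι) : 𝔼 ε : ι → ℤˣ, Φ (∑ j ∈ s, ε j • f j) ≤ ∑ j ∈ s, Φ (f j) := by
  induction s using Finset.induction with
  | empty => simp [h0]
  | insert i s hi ih =>
    calc 𝔼 ε : ι → ℤˣ, Φ (∑ j ∈ insert i s, ε j • f j)
        = 2⁻¹ * 𝔼 ε : ι → ℤˣ, (Φ (∑ j ∈ s, ε j • f j + f i) + Φ (∑ j ∈ s, ε j • f j - f i)) :=
          expect_sum_insert_sign_smul Φ f hi
      _ ≤ 2⁻¹ * 𝔼 ε : ι → ℤˣ, 2 * (Φ (∑ j ∈ s, ε j • f j) + Φ (f i)) := by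
          gcongr
          exact hΦ _ _
      _ = (𝔼 ε : ι → ℤˣ, Φ (∑ j ∈ s, ε j • f j)) + Φ (f i) := by
          rw [← mul_expect, inv_mul_cancel_left₀ two_ne_zero, expect_add_distrib,
            Fintype.expect_const]
      _ ≤ ∑ j ∈ insert i s, Φ (f j) := by
          rw [sum_insert hi, add_comm]
          gcongr

variable {E : Type*} [NormedAddCommGroup E] [InnerProductSpace ℝ E]

lemma expect_norm_sum_sign_smul_sq (a : ι → E) (s : Finset ι) :
    𝔼 ε : ι → ℤˣ, ‖∑ j ∈ s, ε j • a j‖ ^ 2 = ∑ j ∈ s, ‖a j‖ ^ 2 := by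
  have hpar (x y : E) := parallelogram_law_with_norm ℝ x y
  apply le_antisymm
  · exact expect_sum_sign_smul_le_of_add_sub_le (Φ := fun x : E ↦ ‖x‖ ^ 2) (by simp)
      (fun x y ↦ (hpar x y).le) a s
  · have hneg := expect_sum_sign_smul_le_of_add_sub_le (Φ := fun x : E ↦ -‖x‖ ^ 2) (by simp)
      (fun x y ↦ by linarith [hpar x y]) a s
    simpa [expect_neg_distrib] using hneg

lemma norm_add_pow_four_add_norm_sub_pow_four_le (x y : E) :
    ‖x + y‖ ^ 4 + ‖x - y‖ ^ 4 ≤ 2 * (‖x‖ ^ 4 + 6 * ‖x‖ ^ 2 * ‖y‖ ^ 2 + ‖y‖ ^ 4) := by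
  have hinner : inner ℝ x y ^ 2 ≤ ‖x‖ ^ 2 * ‖y‖ ^ 2 := by
    rw [← mul_pow]
    exact sq_le_sq' (neg_le_of_abs_le (abs_real_inner_le_norm x y)) (real_inner_le_norm x y)
  calc ‖x + y‖ ^ 4 + ‖x - y‖ ^ 4 = (‖x + y‖ ^ 2) ^ 2 + (‖x - y‖ ^ 2) ^ 2 := by ring
    _ = 2 * (‖x‖ ^ 2 + ‖y‖ ^ 2) ^ 2 + 8 * inner ℝ x y ^ 2 := by
        rw [norm_add_sq_real, norm_sub_sq_real]
        ring
    _ ≤ 2 * (‖x‖ ^ 2 + ‖y‖ ^ 2) ^ 2 + 8 * (‖x‖ ^ 2 * ‖y‖ ^ 2) := by gcongr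
    _ = 2 * (‖x‖ ^ 4 + 6 * ‖x‖ ^ 2 * ‖y‖ ^ 2 + ‖y‖ ^ 4) := by ring

lemma expect_norm_sum_sign_smul_pow_four_le (a : ι → E) (s : Finset ι) :
    𝔼 ε : ι → ℤˣ, ‖∑ j ∈ s, ε j • a j‖ ^ 4 ≤ 3 * (∑ j ∈ s, ‖a j‖ ^ 2) ^ 2 := by
  induction s using Finset.induction with
  | empty => simp
  | insert i s hi ih =>
    set S : (ι → ℤˣ) → E := fun ε ↦ ∑ j ∈ s, ε j • a j
    set T := ∑ j ∈ s, ‖a j‖ ^ 2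
    calc 𝔼 ε : ι → ℤˣ, ‖∑ j ∈ insert i s, ε j • a j‖ ^ 4
        = 2⁻¹ * 𝔼 ε, (‖S ε + a i‖ ^ 4 + ‖S ε - a i‖ ^ 4) :=
          expect_sum_insert_sign_smul (‖·‖ ^ 4) a hi
      _ ≤ 2⁻¹ * 𝔼 ε, 2 * (‖S ε‖ ^ 4 + 6 * ‖S ε‖ ^ 2 * ‖a i‖ ^ 2 + ‖a i‖ ^ 4) := by
          gcongr
          exact norm_add_pow_four_add_norm_sub_pow_four_le _ _
      _ = (𝔼 ε, ‖S ε‖ ^ 4) + 6 * T * ‖a i‖ ^ 2 + ‖a i‖ ^ 4 := by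
          rw [← mul_expect, inv_mul_cancel_left₀ two_ne_zero, expect_add_distrib,
            expect_add_distrib, Fintype.expect_const, ← expect_mul, ← mul_expect,
            expect_norm_sum_sign_smul_sq]
      _ ≤ 3 * T ^ 2 + 6 * T * ‖a i‖ ^ 2 + 3 * ‖a i‖ ^ 4 := by
          gcongr
          exact le_mul_of_one_le_left (by positivity) (by norm_num)
      _ = 3 * (∑ j ∈ insert i s, ‖a j‖ ^ 2) ^ 2 := by
          rw [sum_insert hi]
          ring

-- Bounds `z` from below by its second and fourth powers, with equality at `z = 0` and `z = c`.
lemma three_mul_sq_mul_sq_le_pow_four_add {c z : ℝ} (hc : 0 ≤ c) (hz : 0 ≤ z) :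
    3 * c ^ 2 * z ^ 2 ≤ z ^ 4 + 2 * c ^ 3 * z := by
  have : 0 ≤ z * (z - c) ^ 2 * (z + 2 * c) := by positivity
  linarith

theorem sqrt_sum_norm_sq_le_sqrt_three_mul_expect_norm (a : ι → E) :
    √(∑ j, ‖a j‖ ^ 2) ≤ √3 * 𝔼 ε : ι → ℤˣ, ‖∑ j, ε j • a j‖ := by
  set m := 𝔼 ε : ι → ℤˣ, ‖∑ j, ε j • a j‖
  set c := √3 * √(∑ j, ‖a j‖ ^ 2) with hc_def
  have hc0 : 0 ≤ c := by positivity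
  have hc : c ^ 2 = 3 * ∑ j, ‖a j‖ ^ 2 := by
    rw [mul_pow, Real.sq_sqrt zero_le_three, Real.sq_sqrt (by positivity)]
  have hm : 0 ≤ m := expect_nonneg fun _ _ ↦ norm_nonneg _
  have hmean : c ^ 4 ≤ c ^ 4 / 3 + 2 * c ^ 3 * m :=
    calc c ^ 4 = 3 * c ^ 2 * 𝔼 ε : ι → ℤˣ, ‖∑ j, ε j • a j‖ ^ 2 := by
          rw [expect_norm_sum_sign_smul_sq, mul_right_comm, ← hc]
          ring
      _ ≤ 𝔼 ε : ι → ℤˣ, (‖∑ j, ε j • a j‖ ^ 4 + 2 * c ^ 3 * ‖∑ j, ε j • a j‖) := by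
          rw [mul_expect]
          gcongr
          exact three_mul_sq_mul_sq_le_pow_four_add hc0 (norm_nonneg _)
      _ ≤ 3 * (∑ j, ‖a j‖ ^ 2) ^ 2 + 2 * c ^ 3 * m := by
          rw [expect_add_distrib, ← mul_expect]
          gcongr
          exact expect_norm_sum_sign_smul_pow_four_le a univ
      _ = c ^ 4 / 3 + 2 * c ^ 3 * m := by
          rw [show c ^ 4 = (c ^ 2) ^ 2 by ring, hc]
          ring
  have hcm : c ≤ 3 * m := by
    rcases hc0.eq_or_lt with hzero | hpos
    · rw [← hzero]
      exact mul_nonneg zero_le_three hm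
    · exact le_of_mul_le_mul_left (by linarith) (pow_pos hpos 3)
  refine le_of_mul_le_mul_left ?_ (by positivity : 0 < √3)
  rwa [← hc_def, ← mul_assoc, Real.mul_self_sqrt zero_le_three]

end SignAverages

section Lp

lemma norm_add_rpow_add_norm_sub_rpow_le {E : Type*} [NormedAddCommGroup E]
    [InnerProductSpace ℝ E] {r : ℝ} (hr0 : 0 ≤ r) (hr2 : r ≤ 2) (x y : E) :
    ‖x + y‖ ^ r + ‖x - y‖ ^ r ≤ 2 * (‖x‖ ^ r + ‖y‖ ^ r) := by
  have hsq (z : E) : (‖z‖ ^ 2) ^ (r / 2) = ‖z‖ ^ r := by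
    rw [← Real.rpow_natCast_mul (norm_nonneg z)]
    congr 1
    push_cast
    ring
  have hconcave := (Real.concaveOn_rpow (p := r / 2) (by linarith) (by linarith)).2
    (Set.mem_Ici.2 (sq_nonneg ‖x + y‖)) (Set.mem_Ici.2 (sq_nonneg ‖x - y‖))
    (by norm_num : (0 : ℝ) ≤ 2⁻¹) (by norm_num : (0 : ℝ) ≤ 2⁻¹) (by norm_num)
  have hmean : 2⁻¹ * ‖x + y‖ ^ 2 + 2⁻¹ * ‖x - y‖ ^ 2 = ‖x‖ ^ 2 + ‖y‖ ^ 2 := by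
    linarith [parallelogram_law_with_norm ℝ x y]
  have hsubadd := Real.rpow_add_le_add_rpow (sq_nonneg ‖x‖) (sq_nonneg ‖y‖)
    (by linarith : 0 ≤ r / 2) (by linarith)
  simp only [smul_eq_mul, hmean, hsq] at hconcave hsubadd
  linarith

variable {α : Type*} [MeasurableSpace α] {μ : Measure α} {p : ℝ≥0∞}

lemma lpNorm_rpow_toReal {F : Type*} [NormedAddCommGroup F] {f : α → F} (hp₀ : p ≠ 0)
    (hp : p ≠ ∞) (hf : AEStronglyMeasurable f μ) :
    lpNorm f p μ ^ p.toReal = ∫ x, ‖f x‖ ^ p.toReal ∂μ := by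
  rw [lpNorm_eq_integral_norm_rpow_toReal hp₀ hp hf, Real.rpow_inv_rpow (by positivity)
    (ENNReal.toReal_ne_zero.2 ⟨hp₀, hp⟩)]

lemma Lp_norm_eq_lpNorm {F : Type*} [NormedAddCommGroup F] (f : Lp F p μ) :
    ‖f‖ = lpNorm f p μ := by
  rw [Lp.norm_def, toReal_eLpNorm (Lp.aestronglyMeasurable f)]

lemma lpNorm_congr_ae {F : Type*} [NormedAddCommGroup F] {f g : α → F} (hfg : f =ᵐ[μ] g) :
    lpNorm f p μ = lpNorm g p μ := by
  unfold lpNorm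
  congr 1 <;> simp [aestronglyMeasurable_congr hfg, eLpNorm_congr_ae hfg]

lemma rpow_sum_norm_integral_rpow_le {ι : Type*} [Fintype ι] {G : Type*} [NormedAddCommGroup G]
    [NormedSpace ℝ G] [CompleteSpace G] {q : ℝ} (hq : 1 ≤ q) {g : ι → α → G}
    (hg : ∀ j, Integrable (g j) μ) :
    (∑ j, ‖∫ x, g j x ∂μ‖ ^ q) ^ (1 / q) ≤ ∫ x, (∑ j, ‖g j x‖ ^ q) ^ (1 / q) ∂μ := by
  have : Fact (1 ≤ ENNReal.ofReal q) := ⟨ENNReal.one_le_ofReal.2 hq⟩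
  have hq_toReal : (ENNReal.ofReal q).toReal = q := ENNReal.toReal_ofReal (by linarith)
  have hnorm (v : PiLp (ENNReal.ofReal q) fun _ : ι ↦ G) : ‖v‖ = (∑ j, ‖v j‖ ^ q) ^ (1 / q) := by
    rw [PiLp.norm_eq_sum (by rw [hq_toReal]; linarith), hq_toReal]
  set gVec : α → PiLp (ENNReal.ofReal q) fun _ : ι ↦ G := fun x ↦ WithLp.toLp _ fun j ↦ g j x
  have heval (j : ι) : (∫ x, gVec x ∂μ) j = ∫ x, g j x ∂μ := eval_integral_piLp hg j
  have hle := norm_integral_le_integral_norm (μ := μ) gVec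
  simpa only [hnorm, heval] using hle

lemma rpow_sum_lpNorm_rpow_le_lpNorm {ι : Type*} [Fintype ι] {F : Type*} [NormedAddCommGroup F]
    {q : ℝ} (hp₀ : p ≠ 0) (hp : p ≠ ∞) (hpq : p.toReal ≤ q) {f : ι → α → F}
    (hf : ∀ j, MemLp (f j) p μ) :
    (∑ j, lpNorm (f j) p μ ^ q) ^ (1 / q) ≤ lpNorm (fun x ↦ (∑ j, ‖f j x‖ ^ q) ^ (1 / q)) p μ := by
  set r := p.toReal
  have hr : 0 < r := ENNReal.toReal_pos hp₀ hp
  have hpow {t : ℝ} (ht : 0 ≤ t) : (t ^ r) ^ (q / r) = t ^ q := by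
    rw [← Real.rpow_mul ht, mul_div_cancel₀ _ hr.ne']
  have hroot {t : ℝ} (ht : 0 ≤ t) : (t ^ (1 / q)) ^ r = t ^ (1 / (q / r)) := by
    rw [← Real.rpow_mul ht, one_div_div, one_div_mul_eq_div]
  have hmeas : AEStronglyMeasurable (fun x ↦ (∑ j, ‖f j x‖ ^ q) ^ (1 / q)) μ := by
    have (j : ι) := (hf j).aestronglyMeasurable.norm.aemeasurable
    exact AEMeasurable.aestronglyMeasurable (by fun_prop)
  have hsum : 0 ≤ ∑ j, lpNorm (f j) p μ ^ q :=
    sum_nonneg fun _ _ ↦ Real.rpow_nonneg lpNorm_nonneg q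
  have hrpow (j : ι) : lpNorm (f j) p μ ^ r = ∫ x, ‖f j x‖ ^ r ∂μ :=
    lpNorm_rpow_toReal hp₀ hp (hf j).aestronglyMeasurable
  refine (Real.rpow_le_rpow_iff (Real.rpow_nonneg hsum _) lpNorm_nonneg hr).1 ?_
  calc ((∑ j, lpNorm (f j) p μ ^ q) ^ (1 / q)) ^ r
      = (∑ j, ‖∫ x, ‖f j x‖ ^ r ∂μ‖ ^ (q / r)) ^ (1 / (q / r)) := by
        rw [hroot hsum]
        simp only [← hrpow, Real.norm_of_nonneg (Real.rpow_nonneg lpNorm_nonneg _),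
          hpow lpNorm_nonneg]
    _ ≤ ∫ x, (∑ j, ‖‖f j x‖ ^ r‖ ^ (q / r)) ^ (1 / (q / r)) ∂μ :=
        rpow_sum_norm_integral_rpow_le ((one_le_div hr).2 hpq) fun j ↦
          (hf j).integrable_norm_rpow hp₀ hp
    _ = lpNorm (fun x ↦ (∑ j, ‖f j x‖ ^ q) ^ (1 / q)) p μ ^ r := by
        rw [lpNorm_rpow_toReal hp₀ hp hmeas]
        congr 1 with x
        simp only [Real.norm_of_nonneg (Real.rpow_nonneg (norm_nonneg _) _), hpow (norm_nonneg _)]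
        rw [Real.norm_of_nonneg (by positivity), hroot (by positivity)]

lemma Lp_coeFn_sum_sign_smul {ι : Type*} {F : Type*} [NormedAddCommGroup F] (f : ι → Lp F p μ)
    (ε : ι → ℤˣ) (s : Finset ι) :
    ⇑(∑ j ∈ s, ε j • f j) =ᵐ[μ] fun x ↦ ∑ j ∈ s, ε j • f j x := by
  classical
  induction s using Finset.induction with
  | empty =>
    rw [sum_empty]
    exact Lp.coeFn_zero F p μ
  | insert i s hi ih =>
    have hi_smul : ⇑(ε i • f i) =ᵐ[μ] fun x ↦ ε i • f i x := by
      rcases Int.units_eq_one_or (ε i) with h | h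
      · simp [h]
      · simp only [h, Units.neg_smul, one_smul]
        exact Lp.coeFn_neg (f i)
    rw [sum_insert hi]
    filter_upwards [Lp.coeFn_add (ε i • f i) (∑ j ∈ s, ε j • f j), hi_smul, ih] with x hadd hx hs
    rw [hadd, Pi.add_apply, hx, hs, sum_insert hi]

section InnerProductSpace

variable {E : Type*} [NormedAddCommGroup E] [InnerProductSpace ℝ E] [Fact (1 ≤ p)]

lemma Lp_norm_add_rpow_add_norm_sub_rpow_le (hp : p ≤ 2) (f g : Lp E p μ) :
    ‖f + g‖ ^ p.toReal + ‖f - g‖ ^ p.toReal ≤ 2 * (‖f‖ ^ p.toReal + ‖g‖ ^ p.toReal) := by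
  have hp₀ : p ≠ 0 := (one_pos.trans_le Fact.out).ne'
  have hp_top : p ≠ ∞ := (hp.trans_lt ENNReal.ofNat_lt_top).ne
  have hr2 : p.toReal ≤ 2 := ENNReal.toReal_le_of_le_ofReal zero_le_two (by simpa using hp)
  have hint (h : Lp E p μ) : Integrable (fun x ↦ ‖h x‖ ^ p.toReal) μ :=
    (Lp.memLp h).integrable_norm_rpow hp₀ hp_top
  simp only [Lp_norm_eq_lpNorm, lpNorm_rpow_toReal hp₀ hp_top (Lp.aestronglyMeasurable _)]
  rw [← integral_add (hint _) (hint _), ← integral_add (hint _) (hint _), ← integral_const_mul]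
  refine integral_mono_ae ((hint _).add (hint _)) (((hint _).add (hint _)).const_mul 2) ?_
  filter_upwards [Lp.coeFn_add f g, Lp.coeFn_sub f g] with x hadd hsub
  simpa only [hadd, hsub, Pi.add_apply, Pi.sub_apply] using
    norm_add_rpow_add_norm_sub_rpow_le ENNReal.toReal_nonneg hr2 (f x) (g x)

variable {ι : Type*} [Fintype ι] [DecidableEq ι]

theorem expect_norm_sum_sign_smul_le_rpow_sum_norm_rpow (hp : p ≤ 2) (f : ι → Lp E p μ) :
    𝔼 ε : ι → ℤˣ, ‖∑ j, ε j • f j‖ ≤ (∑ j, ‖f j‖ ^ p.toReal) ^ (1 / p.toReal) := by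
  have hr1 : 1 ≤ p.toReal := by
    simpa using ENNReal.toReal_mono (hp.trans_lt ENNReal.ofNat_lt_top).ne (Fact.out : 1 ≤ p)
  have hjensen : 𝔼 ε : ι → ℤˣ, ‖∑ j, ε j • f j‖ ≤
      (𝔼 ε : ι → ℤˣ, ‖∑ j, ε j • f j‖ ^ p.toReal) ^ (1 / p.toReal) := by
    simpa using Real.compact_inner_le_weight_mul_Lp_of_nonneg univ hr1
      (w := fun _ : ι → ℤˣ ↦ 1) (f := fun ε ↦ ‖∑ j, ε j • f j‖)
      (fun _ ↦ zero_le_one) fun _ ↦ norm_nonneg _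
  have htype : 𝔼 ε : ι → ℤˣ, ‖∑ j, ε j • f j‖ ^ p.toReal ≤ ∑ j, ‖f j‖ ^ p.toReal :=
    expect_sum_sign_smul_le_of_add_sub_le (Φ := fun h : Lp E p μ ↦ ‖h‖ ^ p.toReal)
      (by simp [(zero_lt_one.trans_le hr1).ne']) (Lp_norm_add_rpow_add_norm_sub_rpow_le hp) f univ
  refine hjensen.trans (Real.rpow_le_rpow ?_ htype (by positivity))
  exact expect_nonneg fun _ _ ↦ by positivity

theorem rpow_sum_norm_sq_le_sqrt_three_mul_expect_norm (hp : p ≤ 2) (f : ι → Lp E p μ) :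
    (∑ j, ‖f j‖ ^ 2) ^ ((1 : ℝ) / 2) ≤ √3 * 𝔼 ε : ι → ℤˣ, ‖∑ j, ε j • f j‖ := by
  have hp₀ : p ≠ 0 := (one_pos.trans_le Fact.out).ne'
  have hp_top : p ≠ ∞ := (hp.trans_lt ENNReal.ofNat_lt_top).ne
  have hr2 : p.toReal ≤ 2 := ENNReal.toReal_le_of_le_ofReal zero_le_two (by simpa using hp)
  set S : (ι → ℤˣ) → α → E := fun ε x ↦ ∑ j, ε j • f j x
  have hS (ε : ι → ℤˣ) : ⇑(∑ j, ε j • f j) =ᵐ[μ] S ε := Lp_coeFn_sum_sign_smul f ε univ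
  have hmem (ε : ι → ℤˣ) : MemLp (fun x ↦ ‖S ε x‖) p μ :=
    ((memLp_congr_ae (hS ε)).1 (Lp.memLp _)).norm
  have hmem_expect : MemLp (𝔼 ε, fun x ↦ ‖S ε x‖) p μ := by
    simp only [expect, ← NNRat.cast_smul_eq_nnqsmul ℝ]
    exact (memLp_finsetSum' univ fun ε _ ↦ hmem ε).const_smul _
  calc (∑ j, ‖f j‖ ^ 2) ^ ((1 : ℝ) / 2)
      = (∑ j, lpNorm (f j) p μ ^ (2 : ℝ)) ^ ((1 : ℝ) / 2) := by
        simp only [Lp_norm_eq_lpNorm, Real.rpow_two]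
    _ ≤ lpNorm (fun x ↦ (∑ j, ‖f j x‖ ^ (2 : ℝ)) ^ ((1 : ℝ) / 2)) p μ :=
        rpow_sum_lpNorm_rpow_le_lpNorm hp₀ hp_top hr2 fun j ↦ Lp.memLp (f j)
    _ ≤ lpNorm (√3 • 𝔼 ε, fun x ↦ ‖S ε x‖) p μ := by
        refine lpNorm_mono_real (hmem_expect.const_smul _) fun x ↦ ?_
        rw [Real.norm_of_nonneg (by positivity), ← Real.sqrt_eq_rpow]
        simpa using sqrt_sum_norm_sq_le_sqrt_three_mul_expect_norm fun j ↦ f j x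
    _ = √3 * lpNorm (𝔼 ε, fun x ↦ ‖S ε x‖) p μ := by
        rw [lpNorm_const_smul, coe_nnnorm, Real.norm_of_nonneg (Real.sqrt_nonneg 3)]
    _ ≤ √3 * 𝔼 ε, lpNorm (fun x ↦ ‖S ε x‖) p μ := by
        gcongr
        exact lpNorm_expect_le (fun ε _ ↦ hmem ε) Fact.out
    _ = √3 * 𝔼 ε : ι → ℤˣ, ‖∑ j, ε j • f j‖ := by
        congr! 2 with ε
        rw [Lp_norm_eq_lpNorm, lpNorm_congr_ae (hS ε), lpNorm_norm]
        exact (Lp.aestronglyMeasurable _).congr (hS ε)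

end InnerProductSpace

end Lp

theorem stmt2_general {p : ℝ≥0∞} [Fact (1 ≤ p)] (hp : p ≤ 2) {α : Type*} [MeasurableSpace α]
    {μ : Measure α} {E : Type*} [NormedAddCommGroup E] [InnerProductSpace ℝ E] {N : ℕ}
    (f : Fin N → Lp E p μ) :
    (√3)⁻¹ * (∑ j, ‖f j‖ ^ 2) ^ ((1 : ℝ) / 2) ≤
        ∫ t in Set.Icc (0 : ℝ) 1, ‖∑ j, rademacher (j.1 + 1) t • f j‖ ∧
      ∫ t in Set.Icc (0 : ℝ) 1, ‖∑ j, rademacher (j.1 + 1) t • f j‖ ≤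
        (∑ j, ‖f j‖ ^ p.toReal) ^ (1 / p.toReal) := by
  rw [integral_norm_sum_rademacher_smul, inv_mul_le_iff₀ (by positivity)]
  exact ⟨rpow_sum_norm_sq_le_sqrt_three_mul_expect_norm hp f,
    expect_norm_sum_sign_smul_le_rpow_sum_norm_rpow hp f⟩

/-- For `1 ≤ p ≤ 2` and any measure space `Ω` there is a constant `C_p`
such that for any `f_1, …, f_N ∈ L^p(Ω)`,
`C_p⁻¹ (∑ ‖f_j‖_p²)^{1/2} ≤ ∫_0^1 ‖∑ r_j(t) f_j‖_p dt ≤ C_p (∑ ‖f_j‖_p^p)^{1/p}`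
(`L^p` has type `p` and cotype `2`). -/
theorem stmt2 (p : ℝ) (hp1 : 1 ≤ p) (hp2 : p ≤ 2) [Fact (1 ≤ ENNReal.ofReal p)]
    {α : Type*} [MeasurableSpace α] (μ : Measure α) :
    ∃ C : ℝ, 0 < C ∧
      ∀ (N : ℕ) (f : Fin N → Lp ℝ (ENNReal.ofReal p) μ),
        C⁻¹ * (∑ j, ‖f j‖ ^ 2) ^ ((1:ℝ)/2) ≤
            ∫ t in Set.Icc (0:ℝ) 1, ‖∑ j, rademacher (j.1 + 1) t • f j‖ ∧
        (∫ t in Set.Icc (0:ℝ) 1, ‖∑ j, rademacher (j.1 + 1) t • f j‖) ≤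
            C * (∑ j, ‖f j‖ ^ p) ^ (1/p) := by
  refine ⟨√3, by positivity, fun N f ↦ ?_⟩
  have hp : ENNReal.ofReal p ≤ 2 := by simpa using ENNReal.ofReal_le_ofReal hp2
  obtain ⟨hcotype, htype⟩ := stmt2_general hp f
  rw [ENNReal.toReal_ofReal (by linarith)] at htype
  exact ⟨hcotype, htype.trans (le_mul_of_one_le_left (by positivity) (by norm_num))⟩
end

section
/- Let X be a reflexive Banach space and {(u_j, u_j*)} an unconditional Schauder frame for X. Then {(u_j*, u_j)} is an unconditional Schauder frame for X*; moreover, if {(u_j, u_j*)} is K-unconditional then so is {(u_j*, u_j)}. -/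
open MeasureTheory

/-!
If `∑ fᵢ` is a series in `X*` that converges unconditionally at every point of `X`, then every
subseries has a weak-* sum `S θ`, where `θ : ι → Bool` selects the terms, and `S` is weak-*
continuous on the Cantor cube. Norm balls are weak-* closed, so if `X*` is norm separable the Baire
category theorem gives, for each `ε`, a basic open set of the cube on which `S` oscillates in norm
by at most `ε`. Such a set only restricts finitely many coordinates, and changing the selection
on a finite set `t` of the other ones changes `S` by `∑ i ∈ t, fᵢ`: this is the Cauchy criterion
for norm-unconditional convergence. A frame of a reflexive space has coefficient functionals that
span a dense subspace of `X*`, which is therefore separable.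
-/

open Metric Set TopologicalSpace

section Baire

variable {Y E : Type*} [TopologicalSpace Y] [BaireSpace Y] [Nonempty Y]
  [PseudoMetricSpace E] [SeparableSpace E]

theorem exists_isOpen_dist_le_of_isClosed_preimage_closedBall {S : Y → E}
    (hS : ∀ c r, IsClosed (S ⁻¹' closedBall c r)) {ε : ℝ} (hε : 0 < ε) :
    ∃ U : Set Y, IsOpen U ∧ U.Nonempty ∧ ∀ y ∈ U, ∀ z ∈ U, dist (S y) (S z) ≤ ε := by
  have : Nonempty E := ‹Nonempty Y›.map S
  have hcover : ⋃ n, S ⁻¹' closedBall (denseSeq E n) (ε / 2) = univ := by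
    refine eq_univ_of_forall fun y => mem_iUnion.2 ?_
    obtain ⟨n, hn⟩ := (denseRange_denseSeq E).exists_dist_lt (S y) (half_pos hε)
    exact ⟨n, hn.le⟩
  obtain ⟨n, hn⟩ := nonempty_interior_of_iUnion_of_closed (fun n => hS _ _) hcover
  refine ⟨_, isOpen_interior, hn, fun y hy z hz => ?_⟩
  have hball : interior (S ⁻¹' closedBall (denseSeq E n) (ε / 2)) ⊆ _ := interior_subset
  calc dist (S y) (S z) ≤ dist (S y) (denseSeq E n) + dist (S z) (denseSeq E n) :=
        dist_triangle_right _ _ _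
    _ ≤ ε / 2 + ε / 2 := add_le_add (hball hy) (hball hz)
    _ = ε := add_halves ε

end Baire

section Subseries

variable {ι E : Type*}

theorem continuous_tsum_ite [NormedAddCommGroup E] [CompleteSpace E] {f : ι → E}
    (hf : Summable fun i => ‖f i‖) :
    Continuous fun θ : ι → Bool => ∑' i, if θ i then f i else 0 := by
  refine continuous_tsum (fun i => ?_) hf fun i θ => ?_
  · exact (continuous_of_discreteTopology (f := fun b : Bool => if b then f i else 0)).comp
      (continuous_apply i)
  · split_ifs <;> simp

variable [DecidableEq ι]

theorem hasSum_piecewise_sub_eq_sum [AddCommGroup E] [TopologicalSpace E] [IsTopologicalAddGroup E]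
    [T2Space E] {f : ι → E} {θ : ι → Bool} {t : Finset ι} {a b : E}
    (ha : HasSum (fun i => if t.piecewise (fun _ => true) θ i then f i else 0) a)
    (hb : HasSum (fun i => if t.piecewise (fun _ => false) θ i then f i else 0) b) :
    a - b = ∑ i ∈ t, f i := by
  refine (ha.sub hb).unique ?_
  convert hasSum_sum_of_ne_finset_zero (s := t) (f := fun i => if i ∈ t then f i else 0)
    (L := SummationFilter.unconditional ι) (fun i hi => if_neg hi) using 1
  · ext i
    by_cases hi : i ∈ t <;> simp [hi]
  · exact Finset.sum_congr rfl fun i hi => (if_pos hi).symm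

theorem summable_of_exists_isOpen_dist_le [SeminormedAddCommGroup E] [CompleteSpace E]
    {f : ι → E} {S : (ι → Bool) → E}
    (hS : ∀ (t : Finset ι) (θ : ι → Bool),
      S (t.piecewise (fun _ => true) θ) - S (t.piecewise (fun _ => false) θ) = ∑ i ∈ t, f i)
    (hosc : ∀ ε > 0, ∃ U : Set (ι → Bool), IsOpen U ∧ U.Nonempty ∧
      ∀ θ ∈ U, ∀ η ∈ U, dist (S θ) (S η) ≤ ε) :
    Summable f := by
  rw [summable_iff_vanishing_norm]
  intro ε hε
  obtain ⟨U, hU, ⟨θ, hθ⟩, hUε⟩ := hosc (ε / 2) (half_pos hε)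
  obtain ⟨I, v, hv, hvU⟩ := isOpen_pi_iff.1 hU θ hθ
  refine ⟨I, fun t ht => ?_⟩
  have hmem (b : Bool) : t.piecewise (fun _ => b) θ ∈ U := hvU fun i hi => by
    rw [Finset.piecewise_eq_of_notMem _ _ _ (Finset.disjoint_right.1 ht hi)]
    exact (hv i hi).2
  calc ‖∑ i ∈ t, f i‖
      = dist (S (t.piecewise (fun _ => true) θ)) (S (t.piecewise (fun _ => false) θ)) := by
        rw [← hS t θ, dist_eq_norm]
    _ ≤ ε / 2 := hUε _ (hmem true) _ (hmem false)
    _ < ε := half_lt_self hε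

end Subseries

section WeakStarSubseries

variable {ι 𝕜 X : Type*} [Countable ι] [RCLike 𝕜] [AddCommGroup X] [Module 𝕜 X] [UniformSpace X]
  [IsUniformAddGroup X] [ContinuousSMul 𝕜 X] [BarrelledSpace 𝕜 X] {f : ι → StrongDual 𝕜 X}

theorem exists_strongDual_forall_hasSum_apply (hf : ∀ x, Summable fun i => f i x) :
    ∃ g : StrongDual 𝕜 X, ∀ x, HasSum (fun i => f i x) (g x) := by
  have hlim : Filter.Tendsto (fun (s : Finset ι) x => (∑ i ∈ s, f i) x) Filter.atTop
      (nhds fun x => ∑' i, f i x) := by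
    simp only [tendsto_pi_nhds, sum_apply]
    exact fun x => (hf x).hasSum
  exact ⟨continuousLinearMapOfTendsto (fun s => ∑ i ∈ s, f i) hlim, fun x => (hf x).hasSum⟩

theorem exists_continuous_weakDual_forall_hasSum_ite (hf : ∀ x, Summable fun i => f i x) :
    ∃ S : (ι → Bool) → WeakDual 𝕜 X, Continuous S ∧
      ∀ θ x, HasSum (fun i => if θ i then f i x else 0) (S θ x) := by
  have hsub (θ : ι → Bool) (x : X) :
      Summable fun i => (if θ i then f i else 0 : StrongDual 𝕜 X) x := by
    refine (hf x).norm.of_norm_bounded fun i => ?_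
    split_ifs <;> simp
  choose S hS using fun θ => exists_strongDual_forall_hasSum_apply (hsub θ)
  have hS' (θ : ι → Bool) (x : X) : HasSum (fun i => if θ i then f i x else 0) (S θ x) := by
    convert hS θ x using 2 with i
    split_ifs <;> rfl
  refine ⟨fun θ => StrongDual.toWeakDual (S θ), ?_, hS'⟩
  refine WeakDual.continuous_of_continuous_eval fun x => ?_
  exact (continuous_tsum_ite (hf x).norm).congr fun θ => (hS' θ x).tsum_eq

end WeakStarSubseries

section NormSummability

variable {ι 𝕜 X : Type*} [Countable ι] [RCLike 𝕜] [SeminormedAddCommGroup X] [NormedSpace 𝕜 X]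
  [BarrelledSpace 𝕜 X] [SeparableSpace (StrongDual 𝕜 X)] {f : ι → StrongDual 𝕜 X}

theorem summable_strongDual_of_forall_summable_apply (hf : ∀ x, Summable fun i => f i x) :
    Summable f := by
  classical
  obtain ⟨S, hScont, hS⟩ := exists_continuous_weakDual_forall_hasSum_ite hf
  refine summable_of_exists_isOpen_dist_le (S := WeakDual.toStrongDual ∘ S) (fun t θ => ?_)
    fun ε => exists_isOpen_dist_le_of_isClosed_preimage_closedBall fun c r =>
      (WeakDual.isClosed_closedBall c r).preimage hScont
  ext x
  rw [sum_apply]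
  exact hasSum_piecewise_sub_eq_sum (hS _ x) (hS _ x)

theorem hasSum_strongDual_iff_forall_hasSum_apply {g : StrongDual 𝕜 X} :
    HasSum f g ↔ ∀ x, HasSum (fun i => f i x) (g x) := by
  have heval {g : StrongDual 𝕜 X} (h : HasSum f g) (x : X) : HasSum (fun i => f i x) (g x) :=
    h.mapL (ContinuousLinearMap.apply 𝕜 𝕜 x)
  refine ⟨heval, fun h => ?_⟩
  have hsum := (summable_strongDual_of_forall_summable_apply fun x => (h x).summable).hasSum
  rwa [ContinuousLinearMap.ext fun x => (h x).unique (heval hsum x)]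

end NormSummability

section Reflexive

variable {ι 𝕜 X : Type*} [RCLike 𝕜] [SeminormedAddCommGroup X] [NormedSpace 𝕜 X]

theorem dense_submodule_of_forall_strongDual_eq_zero {p : Submodule 𝕜 X}
    (hp : ∀ φ : StrongDual 𝕜 X, (∀ x ∈ p, φ x = 0) → φ = 0) : Dense (p : Set X) := by
  rw [Submodule.dense_iff_topologicalClosure_eq_top, Submodule.eq_top_iff']
  intro x
  set q := p.topologicalClosure
  have : IsClosed (q : Set X) := p.isClosed_topologicalClosure
  rw [← Submodule.Quotient.mk_eq_zero, SeparatingDual.eq_zero_iff_forall_dual_eq_zero (R := 𝕜)]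
  intro ψ
  refine DFunLike.congr_fun (hp (ψ ∘L q.mkQL) fun y hy => ?_) x
  have hyq : q.mkQL y = 0 :=
    (Submodule.Quotient.mk_eq_zero q).2 (p.le_topologicalClosure hy)
  rw [ContinuousLinearMap.comp_apply, hyq, map_zero]

theorem separableSpace_strongDual_of_surjective_inclusionInDoubleDual [Countable ι]
    (hrefl : Function.Surjective (NormedSpace.inclusionInDoubleDual 𝕜 X))
    {f : ι → StrongDual 𝕜 X} (hf : ∀ x, (∀ i, f i x = 0) → x = 0) :
    SeparableSpace (StrongDual 𝕜 X) := by
  have hdense : Dense (Submodule.span 𝕜 (range f) : Set (StrongDual 𝕜 X)) := by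
    refine dense_submodule_of_forall_strongDual_eq_zero fun φ hφ => ?_
    obtain ⟨x, rfl⟩ := hrefl φ
    have hx : x = 0 := hf x fun i => hφ (f i) (Submodule.subset_span (mem_range_self i))
    rw [hx, map_zero]
  rw [← isSeparable_univ_iff, ← hdense.closure_eq]
  exact (countable_range f).isSeparable.span.closure

end Reflexive

section Frame

variable {ι 𝕜 X : Type*} [RCLike 𝕜] [NormedAddCommGroup X] [NormedSpace 𝕜 X]

/-- `(u i, ustar i)` is an unconditional Schauder frame for `X`: every `x` has the expansion
`x = ∑ ustar i (x) u i`. Convergence is along finite subsets of `ι`, which is unconditional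
convergence. -/
def IsUnconditionalSchauderFrame (u : ι → X) (ustar : ι → StrongDual 𝕜 X) : Prop :=
  ∀ x, HasSum (fun i => ustar i x • u i) x

/-- `K`-unconditionality of `(u i, ustar i)`: for all multipliers `θ` bounded by `1`, the series
`∑ θ i ustar i (x) u i` converges unconditionally, to a vector of norm at most `K ‖x‖`. -/
def IsUnconditionalWith (K : ℝ) (u : ι → X) (ustar : ι → StrongDual 𝕜 X) : Prop :=
  ∀ (x : X) (θ : ι → 𝕜), (∀ i, ‖θ i‖ ≤ 1) →
    ∃ y : X, HasSum (fun i => θ i • (ustar i x • u i)) y ∧ ‖y‖ ≤ K * ‖x‖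

variable {u : ι → X} {ustar : ι → StrongDual 𝕜 X} {K : ℝ}

theorem IsUnconditionalSchauderFrame.eq_zero_of_forall_apply_eq_zero
    (h : IsUnconditionalSchauderFrame u ustar) {x : X} (hx : ∀ i, ustar i x = 0) : x = 0 := by
  refine (h x).unique ?_
  simpa only [hx, zero_smul] using hasSum_zero

theorem IsUnconditionalWith.nonneg [Nontrivial X] (h : IsUnconditionalWith K u ustar) : 0 ≤ K := by
  obtain ⟨x, hx⟩ := exists_ne (0 : X)
  obtain ⟨y, -, hy⟩ := h x 0 fun i => by simp
  exact nonneg_of_mul_nonneg_left ((norm_nonneg y).trans hy) (norm_pos_iff.2 hx)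

variable [Countable ι] [BarrelledSpace 𝕜 X] [SeparableSpace (StrongDual 𝕜 X)]

theorem IsUnconditionalSchauderFrame.dual (h : IsUnconditionalSchauderFrame u ustar) :
    IsUnconditionalSchauderFrame ustar
      fun i => NormedSpace.inclusionInDoubleDual 𝕜 X (u i) := by
  intro xs
  refine hasSum_strongDual_iff_forall_hasSum_apply.2 fun x => ?_
  simpa [mul_comm] using (h x).mapL xs

theorem IsUnconditionalWith.dual (h : IsUnconditionalWith K u ustar) :
    IsUnconditionalWith K ustar fun i => NormedSpace.inclusionInDoubleDual 𝕜 X (u i) := by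
  intro xs θ hθ
  have hpair (x : X) : ∃ y : X,
      HasSum (fun i => (θ i • (xs (u i) • ustar i)) x) (xs y) ∧ ‖y‖ ≤ K * ‖x‖ := by
    obtain ⟨y, hy, hyK⟩ := h x θ hθ
    exact ⟨y, by simpa [mul_comm] using hy.mapL xs, hyK⟩
  choose y hy hyK using hpair
  obtain ⟨ys, hys⟩ := summable_strongDual_of_forall_summable_apply fun x => (hy x).summable
  have hys_apply (x : X) : ys x = xs (y x) :=
    (hasSum_strongDual_iff_forall_hasSum_apply.1 hys x).unique (hy x)
  refine ⟨ys, hys, ?_⟩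
  cases subsingleton_or_nontrivial X
  · simp [Subsingleton.elim xs 0, Subsingleton.elim ys 0]
  refine ys.opNorm_le_bound (mul_nonneg h.nonneg (norm_nonneg xs)) fun x => ?_
  calc ‖ys x‖ = ‖xs (y x)‖ := by rw [hys_apply]
    _ ≤ ‖xs‖ * (K * ‖x‖) := xs.le_opNorm_of_le (hyK x)
    _ = K * ‖xs‖ * ‖x‖ := by ring

theorem stmt4_general (h : IsUnconditionalSchauderFrame u ustar) :
    (IsUnconditionalSchauderFrame ustar fun i => NormedSpace.inclusionInDoubleDual 𝕜 X (u i)) ∧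
    ∀ K : ℝ, IsUnconditionalWith K u ustar →
      IsUnconditionalWith K ustar fun i => NormedSpace.inclusionInDoubleDual 𝕜 X (u i) :=
  ⟨h.dual, fun _ hK => hK.dual⟩

end Frame

/-- If `X` is a reflexive Banach space and `{(u_j, u_j*)}` an
unconditional Schauder frame for `X`, then `{(u_j*, u_j)}` is an unconditional
Schauder frame for `X*`; moreover if `{(u_j, u_j*)}` is `K`-unconditional then so
is `{(u_j*, u_j)}`. -/
theorem stmt4 {X : Type*} [NormedAddCommGroup X] [NormedSpace ℝ X] [CompleteSpace X]
    (hrefl : Function.Surjective (NormedSpace.inclusionInDoubleDual ℝ X))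
    (u : ℕ → X) (ustar : ℕ → X →L[ℝ] ℝ)
    (hframe : ∀ x : X, HasSum (fun j => ustar j x • u j) x) :
    (∀ xs : X →L[ℝ] ℝ, HasSum (fun j => xs (u j) • ustar j) xs) ∧
    ∀ K : ℝ,
      (∀ (x : X) (θ : ℕ → ℝ), (∀ j, |θ j| ≤ 1) →
        ∃ y : X, HasSum (fun j => θ j • (ustar j x • u j)) y ∧ ‖y‖ ≤ K * ‖x‖) →
      (∀ (xs : X →L[ℝ] ℝ) (θ : ℕ → ℝ), (∀ j, |θ j| ≤ 1) →
        ∃ ys : X →L[ℝ] ℝ,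
          HasSum (fun j => θ j • (xs (u j) • ustar j)) ys ∧ ‖ys‖ ≤ K * ‖xs‖) := by
  have := separableSpace_strongDual_of_surjective_inclusionInDoubleDual hrefl fun _ =>
    IsUnconditionalSchauderFrame.eq_zero_of_forall_apply_eq_zero hframe
  exact stmt4_general hframe
end

section
/- For every p > 1 there exist a sequence {g_j} of measurable functions on [0,1] taking only the values −1 and +1, and bounded linear functionals {g_j*} on L^p[0,1], such that every f ∈ L^p[0,1] admits the expansion f = Σ_j g_j*(f) g_j with unconditional convergence in L^p[0,1]. -/
open MeasureTheory

/-!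
The Haar functions `h n`, with values in `{-1, 0, 1}`, form an unconditional basis of `L^p`: to
compare a Haar sum with the sum obtained by changing signs of coefficients, integrate Burkholder's
zigzag-concave majorant along the two martingales. To pass to `±1`-valued functions, write `h n` as
the average of the `2 * N` functions `h n ± (1 - h n ^ 2) * r k`, `k < N`, with Rademacher functions
`r k`. By the weak law of large numbers, for large `N` every partial average is close in `L^p` to a
scalar multiple of `h n`. Replacing each term of the Haar expansion by such an average, with errors
summable in `n`, therefore keeps it unconditionally convergent.
-/

section UnconditionalFrames
open Finset Filter Topology

variable {E F ι : Type*} [NormedAddCommGroup E] [NormedSpace ℝ E]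
  [NormedAddCommGroup F] [NormedSpace ℝ F]

theorem norm_sum_smul_le_of_forall_sign {s : Finset ι} {x : ι → E} {R : ℝ}
    (hR : ∀ ε : ι → ℝ, (∀ i, |ε i| = 1) → ‖∑ i ∈ s, ε i • x i‖ ≤ R)
    {t : ι → ℝ} (ht : ∀ i, |t i| ≤ 1) : ‖∑ i ∈ s, t i • x i‖ ≤ R := by
  classical
  let G : (s → ℝ) →ₗ[ℝ] E := Fintype.linearCombination ℝ fun i : s ↦ x i
  have hG (v : ι → ℝ) : G (fun i ↦ v i) = ∑ i ∈ s, v i • x i := by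
    rw [Fintype.linearCombination_apply, Finset.sum_coe_sort s fun i ↦ v i • x i]
  have hmem : (fun i : s ↦ t i) ∈ convexHull ℝ (Set.univ.pi fun _ : s ↦ ({-1, 1} : Set ℝ)) := by
    rw [convexHull_pi]
    intro i _
    rw [convexHull_pair, segment_eq_Icc (by norm_num)]
    exact abs_le.1 (ht i)
  obtain ⟨ε, hε, hle⟩ := (convexOn_univ_norm.comp_linearMap G).exists_ge_of_mem_convexHull
    (Set.subset_univ _) hmem
  let ε' : ι → ℝ := fun i ↦ if h : i ∈ s then ε ⟨i, h⟩ else 1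
  have hε' (i : ι) : |ε' i| = 1 := by
    by_cases h : i ∈ s
    · rcases hε ⟨i, h⟩ trivial with h' | h' <;> simp_all [ε']
    · simp [ε', h]
  calc ‖∑ i ∈ s, t i • x i‖ ≤ ‖G ε‖ := by simpa only [Function.comp_apply, hG] using hle
    _ = ‖∑ i ∈ s, ε' i • x i‖ := by rw [← hG]; congr 2; ext i; simp [ε']
    _ ≤ R := hR ε' hε'

theorem hasSum_apply_of_dense {T : ι → E →L[ℝ] F} {L : E →L[ℝ] F} {D : Set E} (hD : Dense D)
    {C : ℝ} (hC : ∀ (s : Finset ι), ∀ v ∈ D, ‖∑ i ∈ s, T i v‖ ≤ C * ‖v‖)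
    (hsum : ∀ v ∈ D, HasSum (fun i ↦ T i v) (L v)) (v : E) : HasSum (fun i ↦ T i v) (L v) := by
  let P (s : Finset ι) : E →L[ℝ] F := ∑ i ∈ s, T i
  have hP (s : Finset ι) (v : E) : P s v = ∑ i ∈ s, T i v := by simp [P]
  have hbound (s : Finset ι) (v : E) : ‖P s v‖ ≤ C.toNNReal * ‖v‖ := by
    have hclosed : IsClosed {v | ‖P s v‖ ≤ C.toNNReal * ‖v‖} :=
      isClosed_le (by fun_prop) (by fun_prop)
    refine hclosed.closure_subset_iff.2 (fun v hv ↦ ?_) (hD v)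
    exact (hP s v ▸ hC s v hv).trans (by gcongr; exact Real.le_coe_toNNReal C)
  have hequi : Equicontinuous fun s v ↦ P s v :=
    (LipschitzWith.uniformEquicontinuous _ C.toNNReal fun s ↦
      AddMonoidHomClass.lipschitz_of_bound_nnnorm (P s) _ (hbound s)).equicontinuous
  have hclosed := hequi.isClosed_setOfPred_tendsto (l := atTop) L.continuous
  simp only [hP] at hclosed
  exact hclosed.closure_subset_iff.2 hsum (hD v)

/-- The family `e` satisfies the unconditional basis inequality with constant `C`: bounded
multipliers of the coefficients act on finite linear combinations with norm at most `C`. -/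
def UnconditionalWith (C : ℝ) (e : ι → E) : Prop :=
  ∀ (s : Finset ι) (a t : ι → ℝ), (∀ i, |t i| ≤ 1) →
    ‖∑ i ∈ s, (t i * a i) • e i‖ ≤ C * ‖∑ i ∈ s, a i • e i‖

/-- A decomposition of `x` into a finite sum all of whose partial sums are `ε`-close to a multiple
`t • x` with `|t| ≤ 1`. -/
structure NearlyScalarSplitting {κ : Type*} [Fintype κ] (ε : ℝ) (x : E) (y : κ → E) : Prop where
  sum_eq : ∑ q, y q = x
  exists_norm_sum_sub_le : ∀ Q : Finset κ, ∃ t : ℝ, |t| ≤ 1 ∧ ‖∑ q ∈ Q, y q - t • x‖ ≤ ε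

theorem NearlyScalarSplitting.of_reflections {κ : Type*} [Fintype κ] [Nonempty κ] {ε : ℝ} {x : E}
    {u : κ → E} (hu : ∀ s : κ → ℝ, (∀ k, |s k| ≤ 1) → ‖∑ k, s k • u k‖ ≤ Fintype.card κ * ε) :
    NearlyScalarSplitting ε x fun q : κ ⊕ κ ↦
      (2 * Fintype.card κ : ℝ)⁻¹ • q.elim (fun k ↦ x + u k) (fun k ↦ x - u k) := by
  classical
  have hcard : (0 : ℝ) < Fintype.card κ := by exact_mod_cast Fintype.card_pos
  constructor
  · simp only [← smul_sum, Fintype.sum_sum_type, Sum.elim_inl, Sum.elim_inr, ← sum_add_distrib,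
      add_add_sub_cancel, sum_const, card_univ, ← two_smul ℝ x, ← Nat.cast_smul_eq_nsmul ℝ,
      smul_smul]
    rw [inv_mul_cancel₀ (by positivity), one_smul]
  intro Q
  let s (k : κ) : ℝ := (if k ∈ Q.toLeft then 1 else 0) - if k ∈ Q.toRight then 1 else 0
  have hs (k : κ) : |s k| ≤ 1 := by simp only [s]; split_ifs <;> norm_num
  have hQ : ∑ q ∈ Q, q.elim (fun k ↦ x + u k) (fun k ↦ x - u k) =
      (#Q : ℝ) • x + ∑ k, s k • u k := by
    simp only [sum_sum_eq_sum_toLeft_add_sum_toRight, Sum.elim_inl, Sum.elim_inr, sum_add_distrib,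
      sum_sub_distrib, sum_const, s, sub_smul, ite_smul, one_smul, zero_smul, sum_ite_mem,
      univ_inter, ← card_toLeft_add_card_toRight (u := Q), Nat.cast_add, add_smul,
      Nat.cast_smul_eq_nsmul]
    abel
  refine ⟨(2 * Fintype.card κ : ℝ)⁻¹ * #Q, ?_, ?_⟩
  · have : (#Q : ℝ) ≤ 2 * Fintype.card κ := by
      exact_mod_cast (card_le_univ Q).trans_eq (by rw [Fintype.card_sum, two_mul])
    rw [abs_of_nonneg (by positivity), inv_mul_le_one₀ (by positivity)]
    exact this
  · have hε : 0 ≤ ε := by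
      simpa [hcard] using hu 0 (by simp)
    rw [← smul_sum, hQ, smul_add, smul_smul, add_sub_cancel_left, norm_smul, norm_inv,
      Real.norm_of_nonneg (by positivity), inv_mul_le_iff₀ (by positivity)]
    calc _ ≤ Fintype.card κ * ε := hu s hs
      _ ≤ 2 * Fintype.card κ * ε := by gcongr; linarith

theorem exists_finset_sum_smul_eq_of_mem_span [DecidableEq ι] {e : ι → E} {c : ι → E →L[ℝ] ℝ}
    (hce : ∀ i j, c i (e j) = if i = j then 1 else 0) {v : E}
    (hv : v ∈ Submodule.span ℝ (Set.range e)) :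
    ∃ A : Finset ι, (∀ i ∉ A, c i v = 0) ∧ ∑ i ∈ A, c i v • e i = v := by
  obtain ⟨l, rfl⟩ := Finsupp.mem_span_range_iff_exists_finsupp.1 hv
  have hl (i : ι) : c i (l.sum fun i a ↦ a • e i) = l i := by simp +contextual [Finsupp.sum, hce]
  simp only [hl]
  exact ⟨l.support, fun i ↦ Finsupp.notMem_support_iff.1, rfl⟩

section

variable [DecidableEq ι] {κ : ι → Type*} [∀ i, Fintype (κ i)] {e : ι → E} {c : ι → E →L[ℝ] ℝ}
  {ε : ι → ℝ} {y : ∀ i, κ i → E} {C : ℝ}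

theorem norm_sum_smul_le_of_nearlyScalarSplitting
    (hce : ∀ i j, c i (e j) = if i = j then 1 else 0) (he : UnconditionalWith C e)
    (hy : ∀ i, NearlyScalarSplitting (ε i) (e i) (y i)) (hε : Summable fun i ↦ ‖c i‖ * ε i)
    (S : Finset (Σ i, κ i)) {v : E} (hv : v ∈ Submodule.span ℝ (Set.range e)) :
    ‖∑ j ∈ S, c j.1 v • y j.1 j.2‖ ≤ (C + ∑' i, ‖c i‖ * ε i) * ‖v‖ := by
  obtain ⟨B, hB, hBv⟩ := exists_finset_sum_smul_eq_of_mem_span hce hv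
  let A := B ∪ S.image Sigma.fst
  let slice (i : ι) : Finset (κ i) := S.preimage (Sigma.mk i) sigma_mk_injective.injOn
  choose t ht herr using fun i ↦ (hy i).exists_norm_sum_sub_le (slice i)
  have hε₀ (i : ι) : 0 ≤ ε i := (norm_nonneg _).trans (herr i)
  have hexpand : ∑ i ∈ A, c i v • e i = v :=
    (sum_subset subset_union_left fun i _ hi ↦ by rw [hB i hi, zero_smul]).symm.trans hBv
  have hsplit : ∑ j ∈ S, c j.1 v • y j.1 j.2 =
      ∑ i ∈ A, (t i * c i v) • e i + ∑ i ∈ A, c i v • (∑ q ∈ slice i, y i q - t i • e i) := by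
    rw [← sigma_preimage_mk_of_subset S (subset_union_right : _ ⊆ A), sum_sigma,
      ← sum_add_distrib]
    refine sum_congr rfl fun i _ ↦ ?_
    rw [smul_sub, smul_smul, mul_comm (t i), add_sub_cancel, smul_sum]
  have herror : ‖∑ i ∈ A, c i v • (∑ q ∈ slice i, y i q - t i • e i)‖ ≤
      (∑' i, ‖c i‖ * ε i) * ‖v‖ :=
    calc _ ≤ ∑ i ∈ A, ‖c i‖ * ‖v‖ * ε i := norm_sum_le_of_le _ fun i _ ↦ by
          rw [norm_smul]
          exact mul_le_mul ((c i).le_opNorm v) (herr i) (norm_nonneg _) (by positivity)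
      _ = (∑ i ∈ A, ‖c i‖ * ε i) * ‖v‖ := by simp only [sum_mul, mul_right_comm]
      _ ≤ _ := by
        gcongr
        exact hε.sum_le_tsum A fun i _ ↦ mul_nonneg (norm_nonneg _) (hε₀ i)
  calc _ ≤ C * ‖∑ i ∈ A, c i v • e i‖ + (∑' i, ‖c i‖ * ε i) * ‖v‖ :=
        hsplit ▸ norm_add_le_of_le (he A _ t ht) herror
    _ = _ := by rw [hexpand, add_mul]

theorem hasSum_sigma_smul_of_nearlyScalarSplitting
    (hce : ∀ i j, c i (e j) = if i = j then 1 else 0) (he : UnconditionalWith C e)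
    (hdense : Dense (Submodule.span ℝ (Set.range e) : Set E))
    (hy : ∀ i, NearlyScalarSplitting (ε i) (e i) (y i)) (hε : Summable fun i ↦ ‖c i‖ * ε i)
    (v : E) : HasSum (fun j : Σ i, κ i ↦ c j.1 v • y j.1 j.2) v := by
  refine hasSum_apply_of_dense (T := fun j : Σ i, κ i ↦ (c j.1).smulRight (y j.1 j.2))
    (L := .id ℝ E) hdense
    (fun S _ hv ↦ norm_sum_smul_le_of_nearlyScalarSplitting hce he hy hε S hv) (fun v hv ↦ ?_) v
  obtain ⟨A, hA, hAv⟩ := exists_finset_sum_smul_eq_of_mem_span hce hv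
  have hsum : ∑ j ∈ A.sigma fun _ ↦ univ, c j.1 v • y j.1 j.2 = v := by
    simp only [sum_sigma, ← smul_sum, (hy _).sum_eq, hAv]
  have hzero : ∀ j ∉ A.sigma fun _ ↦ univ, c j.1 v • y j.1 j.2 = 0 := fun j hj ↦ by
    rw [hA j.1 (by simpa using hj), zero_smul]
  have h := hasSum_sum_of_ne_finset_zero (L := .unconditional _) hzero
  rwa [hsum] at h

end

end UnconditionalFrames

section Burkholder
open Set

theorem monotoneOn_and_convexOn_Ici_of_hasDerivAt2_nonneg {f f' f'' : ℝ → ℝ} {r : ℝ}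
    (hf : ∀ a, r ≤ a → HasDerivAt f (f' a) a) (hf' : ∀ a, r ≤ a → HasDerivAt f' (f'' a) a)
    (hr : 0 ≤ f' r) (hf'' : ∀ a, r ≤ a → 0 ≤ f'' a) :
    MonotoneOn f (Ici r) ∧ ConvexOn ℝ (Ici r) f := by
  have hint {a : ℝ} (ha : a ∈ interior (Ici r)) : r ≤ a := interior_subset ha
  have hmono : MonotoneOn f' (Ici r) :=
    monotoneOn_of_hasDerivWithinAt_nonneg (convex_Ici r)
      (fun a ha ↦ (hf' a ha).continuousAt.continuousWithinAt)
      (fun a ha ↦ (hf' a (hint ha)).hasDerivWithinAt) fun a ha ↦ hf'' a (hint ha)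
  have hcont : ContinuousOn f (Ici r) := fun a ha ↦ (hf a ha).continuousAt.continuousWithinAt
  exact ⟨monotoneOn_of_hasDerivWithinAt_nonneg (convex_Ici r) hcont
      (fun a ha ↦ (hf a (hint ha)).hasDerivWithinAt)
      fun a ha ↦ hr.trans (hmono self_mem_Ici (hint ha) (hint ha)),
    convexOn_of_hasDerivWithinAt2_nonneg (convex_Ici r) hcont
      (fun a ha ↦ (hf a (hint ha)).hasDerivWithinAt)
      (fun a ha ↦ (hf' a (hint ha)).hasDerivWithinAt) fun a ha ↦ hf'' a (hint ha)⟩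

theorem convexOn_univ_comp_of_le {E : Type*} [AddCommGroup E] [Module ℝ E] {f : ℝ → ℝ} {g : E → ℝ}
    {r : ℝ} (hf : ConvexOn ℝ (Ici r) f) (hmono : MonotoneOn f (Ici r)) (hg : ConvexOn ℝ univ g)
    (hr : ∀ x, r ≤ g x) : ConvexOn ℝ univ (f ∘ g) := by
  refine ⟨convex_univ, fun x _ y _ a b ha hb hab ↦ ?_⟩
  have hle := hg.2 (mem_univ x) (mem_univ y) ha hb hab
  exact (hmono (hr _) ((hr _).trans hle) hle).trans (hf.2 (hr x) (hr y) ha hb hab)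

/-- The convex profile `A (a ^ p - 1) + B (a ^ (p - 1) - a)`: on a line of slope `1` the Burkholder
function is an affine function minus two such terms, one for each end of the line. -/
noncomputable def burkholderTail (p A B a : ℝ) : ℝ := A * (a ^ p - 1) + B * (a ^ (p - 1) - a)

theorem convexOn_univ_burkholderTail_comp_max {p A B : ℝ} (hp : 1 < p) (hA : 0 ≤ A)
    (hAB : 0 ≤ A * p + B * (p - 2)) :
    ConvexOn ℝ univ (burkholderTail p A B ∘ fun a ↦ max a 1) := by
  have hderiv (a : ℝ) (ha : 1 ≤ a) : HasDerivAt (burkholderTail p A B)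
      (A * (p * a ^ (p - 1)) + B * ((p - 1) * a ^ (p - 2) - 1)) a := by
    have h (q : ℝ) := Real.hasDerivAt_rpow_const (x := a) (p := q) (.inl (by positivity))
    refine ((((h p).sub_const 1).const_mul A).add
      (((h (p - 1)).sub (hasDerivAt_id a)).const_mul B)).congr_deriv ?_
    rw [show p - 1 - 1 = p - 2 by ring]
  have hderiv2 (a : ℝ) (ha : 1 ≤ a) : HasDerivAt
      (fun a ↦ A * (p * a ^ (p - 1)) + B * ((p - 1) * a ^ (p - 2) - 1))
      ((p - 1) * a ^ (p - 3) * (A * p * a + B * (p - 2))) a := by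
    have h (q : ℝ) := Real.hasDerivAt_rpow_const (x := a) (p := q) (.inl (by positivity))
    refine ((((h (p - 1)).const_mul p).const_mul A).add
      ((((h (p - 2)).const_mul (p - 1)).sub_const 1).const_mul B)).congr_deriv ?_
    have ha' : a ^ (p - 1 - 1) = a ^ (p - 3) * a := by
      rw [← Real.rpow_add_one (by positivity)]; ring_nf
    rw [ha', show p - 2 - 1 = p - 3 by ring]
    ring
  have hderiv2_nonneg (a : ℝ) (ha : 1 ≤ a) :
      0 ≤ (p - 1) * a ^ (p - 3) * (A * p * a + B * (p - 2)) := by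
    have hle : A * p ≤ A * p * a := le_mul_of_one_le_right (by positivity) ha
    have := Real.rpow_nonneg (zero_le_one.trans ha) (p - 3)
    exact mul_nonneg (mul_nonneg (by linarith) this) (by linarith)
  obtain ⟨hmono, hconv⟩ := monotoneOn_and_convexOn_Ici_of_hasDerivAt2_nonneg hderiv hderiv2
    (by simp only [Real.one_rpow]; linarith) hderiv2_nonneg
  exact convexOn_univ_comp_of_le hconv hmono
    ((convexOn_id convex_univ).sup (convexOn_const 1 convex_univ)) fun a ↦ le_max_right a 1

/-- Burkholder's function, up to a positive constant. For `1 < p` it is used with a `β` satisfying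
`p - 1 ≤ β` and `1 ≤ β * (p - 1)`; the sharp choice is the larger of `p - 1` and `(p - 1)⁻¹`. -/
noncomputable def burkholder (p β x y : ℝ) : ℝ := (|x| + |y|) ^ (p - 1) * (|y| - β * |x|)

/-- Concavity along all lines of slope `1` and `-1` in the plane. -/
def ZigzagConcave (F : ℝ → ℝ → ℝ) : Prop :=
  ∀ x y s, |s| = 1 → ConcaveOn ℝ univ fun h ↦ F (x + h) (y + s * h)

theorem ZigzagConcave.add_add_sub_le {F : ℝ → ℝ → ℝ} (hF : ZigzagConcave F) {s : ℝ}
    (hs : |s| = 1) (x y d : ℝ) :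
    (F (x + d) (y + s * d) + F (x - d) (y - s * d)) / 2 ≤ F x y := by
  have h := (hF x y s hs).2 (mem_univ d) (mem_univ (-d)) one_half_pos.le one_half_pos.le
    (add_halves 1)
  simp only [smul_eq_mul, mul_neg, add_neg_cancel, add_zero, mul_zero, ← sub_eq_add_neg] at h
  linarith

theorem rpow_eq_rpow_sub_one_mul {p x : ℝ} (hp : p ≠ 0) (hx : 0 ≤ x) : x ^ p = x ^ (p - 1) * x := by
  rw [← Real.rpow_add_one' hx (by simpa using hp), sub_add_cancel]

variable {p β : ℝ}

theorem burkholder_mul (hp : p ≠ 0) (r x y : ℝ) :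
    burkholder p β (r * x) (r * y) = |r| ^ p * burkholder p β x y := by
  rw [burkholder, abs_mul, abs_mul, ← mul_add, Real.mul_rpow (abs_nonneg r) (by positivity),
    rpow_eq_rpow_sub_one_mul hp (abs_nonneg r), burkholder]
  ring

theorem burkholder_add_one_sub_one (hp : p ≠ 0) (a : ℝ) :
    burkholder p β (a + 1) (a - 1) = 2 ^ (p - 1) * ((1 - β) - (1 + β) * a -
      burkholderTail p (β - 1) (1 + β) (max a 1) -
      burkholderTail p (β - 1) (-(1 + β)) (max (-a) 1)) := by
  have htail (B : ℝ) : burkholderTail p (β - 1) B 1 = 0 := by simp [burkholderTail]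
  rcases le_or_gt |a| 1 with ha | ha
  · obtain ⟨h₁, h₂⟩ := abs_le.1 ha
    rw [max_eq_right h₂, max_eq_right (neg_le.1 h₁), htail, htail, burkholder,
      abs_of_nonneg (by linarith), abs_of_nonpos (by linarith)]
    ring_nf
  rcases lt_abs.1 ha with ha | ha
  · rw [max_eq_left ha.le, max_eq_right (by linarith), htail, burkholder,
      abs_of_pos (by linarith), abs_of_pos (by linarith), burkholderTail,
      rpow_eq_rpow_sub_one_mul hp (by linarith), show a + 1 + (a - 1) = 2 * a by ring,
      Real.mul_rpow zero_le_two (by linarith)]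
    ring
  · rw [max_eq_right (by linarith), max_eq_left ha.le, htail, burkholder,
      abs_of_neg (by linarith), abs_of_neg (by linarith), burkholderTail,
      rpow_eq_rpow_sub_one_mul hp (by linarith), show -(a + 1) + -(a - 1) = 2 * -a by ring,
      Real.mul_rpow zero_le_two (by linarith)]
    ring

theorem concaveOn_burkholder_add_one_sub_one (hp : 1 < p) (hβ : p - 1 ≤ β) (hβ' : 1 ≤ β * (p - 1)) :
    ConcaveOn ℝ univ fun a ↦ burkholder p β (a + 1) (a - 1) := by
  have hβ₁ : 1 ≤ β := by nlinarith
  have hright := convexOn_univ_burkholderTail_comp_max (A := β - 1) (B := 1 + β) hp (by linarith)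
    (by linarith)
  have hleft := (convexOn_univ_burkholderTail_comp_max (A := β - 1) (B := -(1 + β)) hp
    (by linarith) (by linarith)).comp_linearMap (-LinearMap.id)
  have haffine : ConcaveOn ℝ univ fun a : ℝ ↦ (1 - β) - (1 + β) * a :=
    (concaveOn_const (1 - β) convex_univ).sub
      ((convexOn_id convex_univ).smul (by linarith : 0 ≤ 1 + β))
  simp_rw [burkholder_add_one_sub_one (by linarith : p ≠ 0)]
  exact ((haffine.sub hright).sub hleft).smul (by positivity)

theorem concaveOn_burkholder_self (hp : 1 < p) (hβ : 1 ≤ β) :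
    ConcaveOn ℝ univ fun a ↦ burkholder p β a a := by
  have hmono : MonotoneOn (fun x : ℝ ↦ x ^ p) (Ici 0) :=
    fun x hx y _ hxy ↦ Real.rpow_le_rpow hx hxy (by linarith)
  have hconv := convexOn_univ_comp_of_le (convexOn_rpow hp.le) hmono convexOn_univ_norm
    (norm_nonneg : ∀ x : ℝ, 0 ≤ ‖x‖)
  have hself (a : ℝ) : burkholder p β a a = -(2 ^ (p - 1) * (β - 1) * ‖a‖ ^ p) := by
    rw [burkholder, ← two_mul, Real.mul_rpow zero_le_two (abs_nonneg a), Real.norm_eq_abs,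
      rpow_eq_rpow_sub_one_mul (p := p) (by linarith) (abs_nonneg a)]
    ring
  simp_rw [hself]
  exact (hconv.smul (mul_nonneg (by positivity) (by linarith))).neg

theorem zigzagConcave_burkholder (hp : 1 < p) (hβ : p - 1 ≤ β) (hβ' : 1 ≤ β * (p - 1)) :
    ZigzagConcave (burkholder p β) := by
  have hdiag (x y : ℝ) : ConcaveOn ℝ univ fun h ↦ burkholder p β (x + h) (y + h) := by
    rcases eq_or_ne x y with rfl | hxy
    · have hβ₁ : 1 ≤ β := by nlinarith
      exact preimage_univ ▸ (concaveOn_burkholder_self hp hβ₁).translate_right x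
    let r := (x - y) / 2
    have hr : r ≠ 0 := div_ne_zero (sub_ne_zero.2 hxy) two_ne_zero
    have hscale (h : ℝ) : burkholder p β (x + h) (y + h) =
        |r| ^ p * burkholder p β ((x + h) / r - 1 + 1) ((x + h) / r - 1 - 1) := by
      rw [← burkholder_mul (by linarith)]
      congr 1 <;> field_simp <;> ring
    have hline := (concaveOn_burkholder_add_one_sub_one hp hβ hβ').comp_affineMap
      (AffineMap.lineMap (x / r - 1) ((x + 1) / r - 1))
    simp_rw [hscale]
    refine (hline.smul (by positivity : 0 ≤ |r| ^ p)).congr fun h _ ↦ ?_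
    simp only [Function.comp_apply, AffineMap.lineMap_apply, smul_eq_mul, vsub_eq_sub,
      vadd_eq_add]
    ring_nf
  intro x y s hs
  rcases eq_or_eq_neg_of_abs_eq hs with rfl | rfl
  · simpa using hdiag x y
  · refine (hdiag x (-y)).congr fun h _ ↦ ?_
    simp only [burkholder, ← abs_neg (y + _)]
    ring_nf

theorem burkholder_mul_self_nonpos (hβ : 1 ≤ β) {s : ℝ} (hs : |s| = 1) (x : ℝ) :
    burkholder p β x (s * x) ≤ 0 := by
  rw [burkholder, abs_mul, hs, one_mul]
  exact mul_nonpos_of_nonneg_of_nonpos (by positivity) (by nlinarith [abs_nonneg x])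

theorem exists_abs_rpow_le_burkholder (hp : 1 < p) (hβ : 0 ≤ β) :
    ∃ K : ℝ, 0 ≤ K ∧ ∀ x y, |y| ^ p ≤ 2 * burkholder p β x y + K * |x| ^ p := by
  refine ⟨(2 * β) ^ p + 2 * ((1 + 2 * β) ^ (p - 1) * β), by positivity, fun x y ↦ ?_⟩
  have hx := abs_nonneg x
  have hy := abs_nonneg y
  have hp₀ : p ≠ 0 := by linarith
  have : 0 ≤ p - 1 := by linarith
  rw [burkholder]
  rcases le_total (2 * β * |x|) |y| with h | h
  · have hmain : |y| ^ (p - 1) * (|y| / 2) ≤ (|x| + |y|) ^ (p - 1) * (|y| - β * |x|) := by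
      gcongr <;> linarith
    have hK : 0 ≤ ((2 * β) ^ p + 2 * ((1 + 2 * β) ^ (p - 1) * β)) * |x| ^ p := by positivity
    rw [rpow_eq_rpow_sub_one_mul hp₀ hy]
    linarith
  · have hmain : |y| ^ p ≤ (2 * β) ^ p * |x| ^ p := by
      rw [← Real.mul_rpow (by positivity) hx]
      gcongr
    have hsum : (|x| + |y|) ^ (p - 1) ≤ (1 + 2 * β) ^ (p - 1) * |x| ^ (p - 1) := by
      rw [← Real.mul_rpow (by positivity) hx]
      gcongr
      linarith
    have hneg : (|x| + |y|) ^ (p - 1) * (β * |x|) ≤ (1 + 2 * β) ^ (p - 1) * β * |x| ^ p := by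
      rw [rpow_eq_rpow_sub_one_mul hp₀ hx]
      linarith [mul_le_mul_of_nonneg_right hsum (by positivity : 0 ≤ β * |x|)]
    have hpos : 0 ≤ (|x| + |y|) ^ (p - 1) * |y| := by positivity
    linarith

end Burkholder

section DyadicCoding
open Set Function

/-- A coding of the points of a probability space by the branches of the binary tree, with heap
numbering of the nodes: the root is `1` and the children of `n` are `2 * n` and `2 * n + 1`, so that
level `k` consists of the `n` with `Nat.log 2 n = k`, i.e. `2 ^ k ≤ n < 2 ^ (k + 1)`. The node of
level `k` on the branch of `x` is `addr k x`, and all nodes of a level are equally likely. -/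
structure DyadicCoding {Ω : Type*} [MeasurableSpace Ω] (μ : Measure Ω) where
  addr : ℕ → Ω → ℕ
  measurable_addr : ∀ k, Measurable (addr k)
  addr_zero : ∀ x, addr 0 x = 1
  addr_succ_div_two : ∀ k x, addr (k + 1) x / 2 = addr k x
  measureReal_fiber : ∀ n ≠ 0, μ.real (addr (Nat.log 2 n) ⁻¹' {n}) = (2 ^ Nat.log 2 n)⁻¹

namespace DyadicCoding

variable {Ω : Type*} [MeasurableSpace Ω] {μ : Measure Ω} (T : DyadicCoding μ) {f : Ω → ℝ}
  {j k m n : ℕ} {x : Ω}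

theorem addr_mem_Ico (k : ℕ) (x : Ω) : T.addr k x ∈ Finset.Ico (2 ^ k) (2 ^ (k + 1)) := by
  induction k with
  | zero => simp [T.addr_zero]
  | succ k ih =>
    rw [← T.addr_succ_div_two] at ih
    simp only [Finset.mem_Ico, pow_succ] at ih ⊢
    omega

theorem log_eq_of_mem_Ico (hn : n ∈ Finset.Ico (2 ^ k) (2 ^ (k + 1))) : Nat.log 2 n = k :=
  Nat.log_eq_of_pow_le_of_lt_pow (Finset.mem_Ico.1 hn).1 (Finset.mem_Ico.1 hn).2

theorem factorsThrough_addr (hjk : j ≤ k) : (T.addr j).FactorsThrough (T.addr k) := by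
  induction k, hjk using Nat.le_induction with
  | base => exact fun _ _ h ↦ h
  | succ k _ ih =>
    intro x y h
    refine ih ?_
    rw [← T.addr_succ_div_two k x, ← T.addr_succ_div_two k y, h]

theorem memLp_of_factorsThrough [IsFiniteMeasure μ] (hf : f.FactorsThrough (T.addr k))
    (q : ENNReal) : MemLp f q μ := by
  obtain ⟨φ, rfl⟩ := (factorsThrough_iff f).1 hf
  refine .of_bound (Measurable.of_discrete.comp (T.measurable_addr k)).aestronglyMeasurable
    (∑ n ∈ Finset.Ico (2 ^ k) (2 ^ (k + 1)), ‖φ n‖) (.of_forall fun x ↦ ?_)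
  exact Finset.single_le_sum (f := fun n ↦ ‖φ n‖) (fun _ _ ↦ norm_nonneg _) (T.addr_mem_Ico k x)

theorem integrable_of_factorsThrough [IsFiniteMeasure μ] (hf : f.FactorsThrough (T.addr k)) :
    Integrable f μ :=
  memLp_one_iff_integrable.1 (T.memLp_of_factorsThrough hf 1)

theorem measurableSet_fiber (k n : ℕ) : MeasurableSet (T.addr k ⁻¹' {n}) :=
  T.measurable_addr k (measurableSet_singleton n)

theorem integral_comp_addr [IsFiniteMeasure μ] (k : ℕ) (φ : ℕ → ℝ) :
    ∫ x, φ (T.addr k x) ∂μ = (2 ^ k)⁻¹ * ∑ n ∈ Finset.Ico (2 ^ k) (2 ^ (k + 1)), φ n := by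
  have hsum (x : Ω) : φ (T.addr k x) = ∑ n ∈ Finset.Ico (2 ^ k) (2 ^ (k + 1)),
      (T.addr k ⁻¹' {n}).indicator (fun _ ↦ φ n) x := by
    rw [Finset.sum_eq_single_of_mem _ (T.addr_mem_Ico k x)]
    · exact (indicator_of_mem rfl _).symm
    · exact fun n _ hn ↦ indicator_of_notMem hn.symm _
  simp_rw [hsum]
  rw [integral_finsetSum _ fun n _ ↦ (integrable_const _).indicator (T.measurableSet_fiber k n),
    Finset.mul_sum]
  refine Finset.sum_congr rfl fun n hn ↦ ?_
  have hn₀ : n ≠ 0 := by rintro rfl; simp at hn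
  have hfiber := T.measureReal_fiber n hn₀
  rw [log_eq_of_mem_Ico hn] at hfiber
  rw [integral_indicator_const _ (T.measurableSet_fiber k n), hfiber, smul_eq_mul]

/-- The Rademacher functions: independent signs, recording whether the branch of a point
turns to the first (`1`) or to the second (`-1`) child at level `k`. -/
def rademacher (k : ℕ) (x : Ω) : ℝ := (-1) ^ T.addr (k + 1) x

/-- The Haar functions `h₀ = 1` and, for `n ≠ 0`, the restriction of a Rademacher function to the
set of points whose branch passes through the node `n`. They are not normalised. -/
def haar (n : ℕ) (x : Ω) : ℝ :=
  if n = 0 then 1 else if T.addr (Nat.log 2 n) x = n then T.rademacher (Nat.log 2 n) x else 0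

theorem rademacher_eq_or (k : ℕ) (x : Ω) : T.rademacher k x = 1 ∨ T.rademacher k x = -1 :=
  neg_one_pow_eq_or ℝ _

theorem measurable_rademacher (k : ℕ) : Measurable (T.rademacher k) :=
  (measurable_from_nat (f := fun n : ℕ ↦ (-1 : ℝ) ^ n)).comp (T.measurable_addr (k + 1))

theorem abs_rademacher (k : ℕ) (x : Ω) : |T.rademacher k x| = 1 := by
  rcases T.rademacher_eq_or k x with h | h <;> simp [h]

theorem haar_mem (n : ℕ) (x : Ω) : T.haar n x ∈ ({-1, 0, 1} : Set ℝ) := by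
  rcases T.rademacher_eq_or (Nat.log 2 n) x with h | h <;> simp only [haar, h] <;> split_ifs <;>
    simp

theorem rademacher_factorsThrough (hjk : j < k) : (T.rademacher j).FactorsThrough (T.addr k) :=
  fun _ _ h ↦ by rw [rademacher, rademacher, T.factorsThrough_addr hjk h]

theorem haar_factorsThrough (hn : n < 2 ^ k) : (T.haar n).FactorsThrough (T.addr k) := by
  intro x y h
  rcases eq_or_ne n 0 with rfl | hn₀
  · rfl
  have hlog : Nat.log 2 n < k := Nat.log_lt_of_lt_pow hn₀ hn
  rw [haar, haar, T.factorsThrough_addr hlog.le h, T.rademacher_factorsThrough hlog h]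

theorem sum_haar_factorsThrough (a : ℕ → ℝ) (k : ℕ) :
    (fun x ↦ ∑ n ∈ Finset.range (2 ^ k), a n * T.haar n x).FactorsThrough (T.addr k) :=
  fun _ _ h ↦ Finset.sum_congr rfl fun _ hn ↦ by
    rw [T.haar_factorsThrough (Finset.mem_range.1 hn) h]

theorem sum_range_two_pow_succ_haar (a : ℕ → ℝ) (k : ℕ) (x : Ω) :
    ∑ n ∈ Finset.range (2 ^ (k + 1)), a n * T.haar n x =
      ∑ n ∈ Finset.range (2 ^ k), a n * T.haar n x + a (T.addr k x) * T.rademacher k x := by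
  rw [← Finset.sum_range_add_sum_Ico _ (Nat.pow_le_pow_right two_pos k.le_succ),
    Finset.sum_eq_single_of_mem _ (T.addr_mem_Ico k x)]
  · have hlog := log_eq_of_mem_Ico (T.addr_mem_Ico k x)
    have hne : T.addr k x ≠ 0 := by rintro h; simpa [h] using T.addr_mem_Ico k x
    rw [haar, hlog, if_neg hne, if_pos rfl]
  · intro n hn hnx
    have hne : n ≠ 0 := by rintro rfl; simp at hn
    rw [haar, if_neg hne, log_eq_of_mem_Ico hn, if_neg hnx.symm, mul_zero]

variable [IsFiniteMeasure μ]

theorem integral_mul_rademacher (hf : f.FactorsThrough (T.addr k)) :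
    ∫ x, f x * T.rademacher k x ∂μ = 0 := by
  obtain ⟨φ, rfl⟩ := (factorsThrough_iff f).1 hf
  simp only [comp_apply, ← T.addr_succ_div_two k, rademacher]
  rw [T.integral_comp_addr (k + 1) fun n ↦ φ (n / 2) * (-1) ^ n]
  have hpair : ∑ n ∈ Finset.Ico (2 ^ (k + 1)) (2 ^ (k + 2)), φ (n / 2) * (-1) ^ n = 0 := by
    refine Finset.sum_involution (fun n _ ↦ n + 1 - 2 * (n % 2)) (fun n hn ↦ ?_) ?_ ?_ ?_
    · rw [show (n + 1 - 2 * (n % 2)) / 2 = n / 2 by omega]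
      rcases n.mod_two_eq_zero_or_one with h | h
      · rw [h, mul_zero, Nat.sub_zero, pow_succ]
        ring
      · obtain ⟨m, rfl⟩ : ∃ m, n = m + 1 := ⟨n - 1, by omega⟩
        rw [h, show m + 1 + 1 - 2 * 1 = m by omega, pow_succ]
        ring
    all_goals
      simp only [Finset.mem_Ico, pow_succ]
      omega
  rw [hpair, mul_zero]

theorem integral_apply_rademacher {G : ℝ → Ω → ℝ} (h₁ : (G 1).FactorsThrough (T.addr k))
    (h₂ : (G (-1)).FactorsThrough (T.addr k)) :
    ∫ x, G (T.rademacher k x) x ∂μ = ∫ x, (G 1 x + G (-1) x) / 2 ∂μ := by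
  have hG (x : Ω) : G (T.rademacher k x) x =
      (G 1 x + G (-1) x) / 2 + (G 1 x - G (-1) x) / 2 * T.rademacher k x := by
    rcases T.rademacher_eq_or k x with h | h <;> rw [h] <;> ring
  have hhalf : (fun x ↦ (G 1 x + G (-1) x) / 2).FactorsThrough (T.addr k) :=
    fun x y h ↦ by simp only [h₁ h, h₂ h]
  have hdiff : (fun x ↦ (G 1 x - G (-1) x) / 2).FactorsThrough (T.addr k) :=
    fun x y h ↦ by simp only [h₁ h, h₂ h]
  have hdiff' : (fun x ↦ (G 1 x - G (-1) x) / 2 * T.rademacher k x).FactorsThrough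
      (T.addr (k + 1)) := fun x y h ↦ by
    simp only [hdiff (T.factorsThrough_addr k.le_succ h),
      T.rademacher_factorsThrough k.lt_succ_self h]
  simp_rw [hG]
  rw [integral_add (T.integrable_of_factorsThrough hhalf) (T.integrable_of_factorsThrough hdiff'),
    T.integral_mul_rademacher hdiff, add_zero]

theorem integral_rademacher_mul_rademacher (hjk : j ≠ k) :
    ∫ x, T.rademacher j x * T.rademacher k x ∂μ = 0 := by
  wlog h : j < k generalizing j k
  · simpa only [mul_comm] using this hjk.symm (hjk.lt_or_gt.resolve_left h)
  exact T.integral_mul_rademacher (T.rademacher_factorsThrough h)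

theorem integral_haar_mul_haar (hmn : m ≠ n) : ∫ x, T.haar m x * T.haar n x ∂μ = 0 := by
  wlog h : m < n generalizing m n
  · simpa only [mul_comm] using this hmn.symm (hmn.lt_or_gt.resolve_left h)
  have hprod (x : Ω) : T.haar m x * T.haar n x =
      (if T.addr (Nat.log 2 n) x = n then T.haar m x else 0) * T.rademacher (Nat.log 2 n) x := by
    rw [haar.eq_def T n, if_neg (by omega)]
    split_ifs <;> simp
  simp_rw [hprod]
  refine T.integral_mul_rademacher fun x y hxy ↦ ?_
  simp only [hxy]
  refine if_ctx_congr .rfl (fun hy ↦ ?_) fun _ ↦ rfl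
  rcases (Nat.log_mono_right h.le).lt_or_eq with hlog | hlog
  · exact T.haar_factorsThrough (Nat.lt_pow_of_log_lt one_lt_two hlog) hxy
  · simp only [haar, hlog, hxy, hy, if_neg hmn.symm]

theorem integral_haar_mul_self_pos [NeZero μ] (n : ℕ) :
    0 < ∫ x, T.haar n x * T.haar n x ∂μ := by
  have hsq (k : ℕ) (x : Ω) : T.rademacher k x * T.rademacher k x = 1 := by
    rcases T.rademacher_eq_or k x with h | h <;> norm_num [h]
  rcases eq_or_ne n 0 with rfl | hn
  · simp [haar]
  have hind (x : Ω) : T.haar n x * T.haar n x =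
      (T.addr (Nat.log 2 n) ⁻¹' {n}).indicator (fun _ ↦ 1) x := by
    by_cases h : T.addr (Nat.log 2 n) x = n <;> simp [haar, hn, h, hsq]
  simp_rw [hind]
  rw [integral_indicator_const _ (T.measurableSet_fiber _ n), T.measureReal_fiber n hn]
  positivity

-- Conditionally on the first `k` levels the new increment is `d * rademacher k` in the first
-- variable and `± d * rademacher k` in the second one, so zigzag concavity makes the integral
-- decrease with `k`.
theorem integral_comp_sum_haar_nonpos {F : ℝ → ℝ → ℝ} (hF : ZigzagConcave F)
    (hF₀ : ∀ x s, |s| = 1 → F x (s * x) ≤ 0) {ε : ℕ → ℝ} (hε : ∀ n, |ε n| = 1) (a : ℕ → ℝ) (k : ℕ) :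
    ∫ x, F (∑ n ∈ Finset.range (2 ^ k), a n * T.haar n x)
      (∑ n ∈ Finset.range (2 ^ k), ε n * a n * T.haar n x) ∂μ ≤ 0 := by
  induction k with
  | zero =>
    refine integral_nonpos fun x ↦ ?_
    simpa [haar] using hF₀ (a 0) (ε 0) (hε 0)
  | succ k ih =>
    let X (x : Ω) := ∑ n ∈ Finset.range (2 ^ k), a n * T.haar n x
    let Y (x : Ω) := ∑ n ∈ Finset.range (2 ^ k), ε n * a n * T.haar n x
    let G (r : ℝ) (x : Ω) := F (X x + a (T.addr k x) * r)
      (Y x + ε (T.addr k x) * a (T.addr k x) * r)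
    have hX : X.FactorsThrough (T.addr k) := T.sum_haar_factorsThrough a k
    have hY : Y.FactorsThrough (T.addr k) := T.sum_haar_factorsThrough (fun n ↦ ε n * a n) k
    have hG (r : ℝ) : (G r).FactorsThrough (T.addr k) := fun x y h ↦ by
      simp only [G, hX h, hY h, h]
    have hmean : (fun x ↦ (G 1 x + G (-1) x) / 2).FactorsThrough (T.addr k) := fun x y h ↦ by
      simp only [hG _ h]
    have hXY : (fun x ↦ F (X x) (Y x)).FactorsThrough (T.addr k) := fun x y h ↦ by
      simp only [hX h, hY h]
    calc _ = ∫ x, G (T.rademacher k x) x ∂μ := by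
          simp only [G, X, Y, sum_range_two_pow_succ_haar,
            T.sum_range_two_pow_succ_haar fun n ↦ ε n * a n]
      _ = ∫ x, (G 1 x + G (-1) x) / 2 ∂μ := T.integral_apply_rademacher (hG 1) (hG (-1))
      _ ≤ ∫ x, F (X x) (Y x) ∂μ := by
          refine integral_mono (T.integrable_of_factorsThrough hmean)
            (T.integrable_of_factorsThrough hXY) fun x ↦ ?_
          simpa only [G, mul_one, mul_neg, ← sub_eq_add_neg, mul_assoc] using
            hF.add_add_sub_le (hε (T.addr k x)) (X x) (Y x) (a (T.addr k x))
      _ ≤ 0 := ih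

theorem exists_integral_abs_sum_haar_rpow_le {p : ℝ} (hp : 1 < p) :
    ∃ C : ℝ, 0 ≤ C ∧ ∀ (a ε : ℕ → ℝ) (k : ℕ), (∀ n, |ε n| = 1) →
      ∫ x, |∑ n ∈ Finset.range (2 ^ k), ε n * a n * T.haar n x| ^ p ∂μ ≤
        C * ∫ x, |∑ n ∈ Finset.range (2 ^ k), a n * T.haar n x| ^ p ∂μ := by
  have hp₁ : 0 < p - 1 := sub_pos.2 hp
  let β := p - 1 + (p - 1)⁻¹
  have hβ : p - 1 ≤ β := le_add_of_nonneg_right (by positivity)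
  have hβ₁ : 1 ≤ β * (p - 1) := by
    rw [add_mul, inv_mul_cancel₀ hp₁.ne']
    exact le_add_of_nonneg_left (by positivity)
  have hβ₂ : 1 ≤ β := by nlinarith [sq_nonneg (p - 2), inv_pos.2 hp₁, mul_inv_cancel₀ hp₁.ne']
  obtain ⟨K, hK₀, hK⟩ := exists_abs_rpow_le_burkholder (β := β) hp (by positivity)
  refine ⟨K, hK₀, fun a ε k hε ↦ ?_⟩
  let X (x : Ω) := ∑ n ∈ Finset.range (2 ^ k), a n * T.haar n x
  let Y (x : Ω) := ∑ n ∈ Finset.range (2 ^ k), ε n * a n * T.haar n x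
  have hX : X.FactorsThrough (T.addr k) := T.sum_haar_factorsThrough a k
  have hY : Y.FactorsThrough (T.addr k) := T.sum_haar_factorsThrough (fun n ↦ ε n * a n) k
  have hint (Φ : ℝ → ℝ → ℝ) : Integrable (fun x ↦ Φ (X x) (Y x)) μ :=
    T.integrable_of_factorsThrough (k := k) fun x y h ↦ by simp only [hX h, hY h]
  have hnonpos : ∫ x, burkholder p β (X x) (Y x) ∂μ ≤ 0 :=
    T.integral_comp_sum_haar_nonpos (zigzagConcave_burkholder hp hβ hβ₁)
      (fun x s hs ↦ burkholder_mul_self_nonpos hβ₂ hs x) hε a k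
  calc ∫ x, |Y x| ^ p ∂μ
      ≤ ∫ x, 2 * burkholder p β (X x) (Y x) + K * |X x| ^ p ∂μ :=
        integral_mono (hint fun _ y ↦ |y| ^ p)
          (hint fun x y ↦ 2 * burkholder p β x y + K * |x| ^ p) fun x ↦ hK (X x) (Y x)
    _ = 2 * ∫ x, burkholder p β (X x) (Y x) ∂μ + K * ∫ x, |X x| ^ p ∂μ := by
        rw [integral_add (hint fun x y ↦ 2 * burkholder p β x y) (hint fun x _ ↦ K * |x| ^ p),
          integral_const_mul, integral_const_mul]
    _ ≤ K * ∫ x, |X x| ^ p ∂μ := by linarith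

end DyadicCoding
end DyadicCoding

section LpEstimates
open Finset

variable {Ω ι : Type*} [MeasurableSpace Ω] {μ : Measure Ω}

theorem norm_toLp_rpow_eq_integral {E : Type*} [NormedAddCommGroup E] {p : ℝ} (hp : 0 < p)
    {f : Ω → E} (hf : MemLp f (ENNReal.ofReal p) μ) :
    ‖hf.toLp f‖ ^ p = ∫ x, ‖f x‖ ^ p ∂μ := by
  rw [Lp.norm_toLp, hf.eLpNorm_eq_integral_rpow_norm (ENNReal.ofReal_ne_zero_iff.2 hp)
    ENNReal.ofReal_ne_top, ENNReal.toReal_ofReal hp.le, ENNReal.toReal_ofReal (by positivity),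
    Real.rpow_inv_rpow (by positivity) hp.ne']

theorem sum_smul_toLp {q : ENNReal} {f : ι → Ω → ℝ} (hf : ∀ i, MemLp (f i) q μ) (s : Finset ι)
    (a : ι → ℝ) : ∑ i ∈ s, a i • (hf i).toLp (f i) =
      (memLp_finsetSum s fun i _ ↦ (hf i).const_mul (a i)).toLp _ := by
  have hcoe : ∀ i ∈ s, ⇑(a i • (hf i).toLp (f i)) =ᵐ[μ] fun x ↦ a i * f i x := fun i _ ↦ by
    filter_upwards [Lp.coeFn_smul (a i) ((hf i).toLp (f i)), (hf i).coeFn_toLp] with x h₁ h₂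
    rw [h₁, Pi.smul_apply, h₂, smul_eq_mul]
  refine Lp.ext ((Lp.coeFn_fun_finsetSum s _).trans (.trans ?_ (MemLp.coeFn_toLp _).symm))
  filter_upwards [(Filter.eventually_all_finset s).2 hcoe] with x h
  exact sum_congr rfl h

theorem exists_biorthogonal_toLp [DecidableEq ι] {q q' : ENNReal} [Fact (1 ≤ q)] [Fact (1 ≤ q')]
    [q'.HolderConjugate q] {h : ι → Ω → ℝ} (hq : ∀ i, MemLp (h i) q μ)
    (hq' : ∀ i, MemLp (h i) q' μ) (horth : ∀ i j, i ≠ j → ∫ x, h i x * h j x ∂μ = 0)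
    (hne : ∀ i, ∫ x, h i x * h i x ∂μ ≠ 0) :
    ∃ c : ι → Lp ℝ q μ →L[ℝ] ℝ, ∀ i j, c i ((hq j).toLp (h j)) = if i = j then 1 else 0 := by
  let c (i : ι) : Lp ℝ q μ →L[ℝ] ℝ := (∫ x, h i x * h i x ∂μ)⁻¹ •
    (ContinuousLinearMap.mul ℝ ℝ).lpPairing μ q' q ((hq' i).toLp (h i))
  have hpairing (i j : ι) :
      (ContinuousLinearMap.mul ℝ ℝ).lpPairing μ q' q ((hq' i).toLp (h i)) ((hq j).toLp (h j)) =
        ∫ x, h i x * h j x ∂μ := by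
    rw [ContinuousLinearMap.lpPairing_eq_integral]
    refine integral_congr_ae ?_
    filter_upwards [(hq j).coeFn_toLp, (hq' i).coeFn_toLp] with x hj hi
    rw [hj, hi, ContinuousLinearMap.mul_apply']
  refine ⟨c, fun i j ↦ ?_⟩
  rw [smul_apply, hpairing, smul_eq_mul]
  split_ifs with hij
  · rw [← hij, inv_mul_cancel₀ (hne i)]
  · rw [horth i j hij, mul_zero]

theorem unconditionalWith_of_range_two_pow {E : Type*} [NormedAddCommGroup E] [NormedSpace ℝ E]
    {e : ℕ → E} {C : ℝ} (he : ∀ (a ε : ℕ → ℝ) (k : ℕ), (∀ n, |ε n| = 1) →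
      ‖∑ n ∈ range (2 ^ k), (ε n * a n) • e n‖ ≤ C * ‖∑ n ∈ range (2 ^ k), a n • e n‖) :
    UnconditionalWith C e := by
  classical
  intro s a t ht
  let b : ℕ → ℝ := (s : Set ℕ).indicator a
  obtain ⟨k, hk⟩ : ∃ k, s ⊆ range (2 ^ k) :=
    ⟨s.sup id, fun n hn ↦ mem_range.2 <| (le_sup (f := id) hn).trans_lt Nat.lt_two_pow_self⟩
  have hb (r : ℕ → ℝ) : ∑ n ∈ range (2 ^ k), r n • b n • e n = ∑ n ∈ s, (r n * a n) • e n := by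
    rw [← sum_subset hk fun n _ hn ↦ by simp [b, hn]]
    exact sum_congr rfl fun n hn ↦ by simp [b, hn, smul_smul]
  have hba : ∑ n ∈ range (2 ^ k), b n • e n = ∑ n ∈ s, a n • e n := by simpa using hb 1
  rw [← hb, ← hba]
  refine norm_sum_smul_le_of_forall_sign (fun ε hε ↦ ?_) ht
  simpa only [smul_smul] using he b ε k hε

section WeakLaw

theorem abs_sum_le_card [Fintype ι] {t : ι → ℝ} (ht : ∀ i, |t i| ≤ 1) :
    |∑ i, t i| ≤ Fintype.card ι := by
  simpa using (abs_sum_le_sum_abs t univ).trans (sum_le_sum fun i _ ↦ ht i)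

variable [IsProbabilityMeasure μ] [Fintype ι] {f : ι → Ω → ℝ}

theorem integral_sum_sq_le (hf : ∀ i, AEStronglyMeasurable (f i) μ) (hf₁ : ∀ i x, |f i x| ≤ 1)
    (horth : ∀ i j, i ≠ j → ∫ x, f i x * f j x ∂μ = 0) :
    ∫ x, (∑ i, f i x) ^ 2 ∂μ ≤ Fintype.card ι := by
  have hint (i j : ι) : Integrable (fun x ↦ f i x * f j x) μ := by
    refine .of_bound ((hf i).mul (hf j)) 1 (.of_forall fun x ↦ ?_)
    rw [norm_mul]
    exact mul_le_one₀ (hf₁ i x) (norm_nonneg _) (hf₁ j x)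
  simp only [sq, sum_mul_sum]
  rw [integral_finsetSum _ fun i _ ↦ integrable_finsetSum _ fun j _ ↦ hint i j]
  have hdiag (i : ι) : ∫ x, ∑ j, f i x * f j x ∂μ ≤ 1 := by
    rw [integral_finsetSum _ fun j _ ↦ hint i j,
      sum_eq_single i (fun j _ hji ↦ horth i j hji.symm) (by simp)]
    simpa using integral_mono (hint i i) (integrable_const 1) fun x ↦
      (abs_le_one_iff_mul_self_le_one).1 (hf₁ i x)
  simpa using sum_le_sum fun i (_ : i ∈ univ) ↦ hdiag i

theorem integrable_apply_sum (hf : ∀ i, AEStronglyMeasurable (f i) μ) (hf₁ : ∀ i x, |f i x| ≤ 1)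
    {Φ : ℝ → ℝ} (hΦ : Continuous Φ) : Integrable (fun x ↦ Φ (∑ i, f i x)) μ := by
  obtain ⟨C, hC⟩ := (isCompact_Icc (a := (-Fintype.card ι : ℝ))
    (b := Fintype.card ι)).exists_bound_of_continuousOn hΦ.continuousOn
  refine .of_bound (hΦ.comp_aestronglyMeasurable (aestronglyMeasurable_fun_sum _ fun i _ ↦ hf i)) C
    (.of_forall fun x ↦ hC _ (abs_le.1 (abs_sum_le_card (hf₁ · x))))

theorem integral_abs_sum_le [Nonempty ι] (hf : ∀ i, AEStronglyMeasurable (f i) μ)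
    (hf₁ : ∀ i x, |f i x| ≤ 1) (horth : ∀ i j, i ≠ j → ∫ x, f i x * f j x ∂μ = 0) :
    ∫ x, |∑ i, f i x| ∂μ ≤ √(Fintype.card ι) := by
  set N := (Fintype.card ι : ℝ)
  have hN : 0 < √N := Real.sqrt_pos.2 (by simp [N, Fintype.card_pos])
  have hamgm (t : ℝ) : |t| ≤ √N / 2 + (2 * √N)⁻¹ * t ^ 2 := by
    rw [← sq_abs, ← sub_nonneg, show √N / 2 + (2 * √N)⁻¹ * |t| ^ 2 - |t| =
      (2 * √N)⁻¹ * (√N - |t|) ^ 2 by field_simp; ring]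
    positivity
  have hint₂ : Integrable (fun x ↦ (2 * √N)⁻¹ * (∑ i, f i x) ^ 2) μ :=
    integrable_apply_sum hf hf₁ (Φ := fun t ↦ (2 * √N)⁻¹ * t ^ 2) (by fun_prop)
  calc ∫ x, |∑ i, f i x| ∂μ ≤ ∫ x, √N / 2 + (2 * √N)⁻¹ * (∑ i, f i x) ^ 2 ∂μ :=
        integral_mono (integrable_apply_sum hf hf₁ continuous_abs) (.add (integrable_const _) hint₂)
          fun x ↦ hamgm _
    _ = √N / 2 + (2 * √N)⁻¹ * ∫ x, (∑ i, f i x) ^ 2 ∂μ := by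
        rw [integral_add (integrable_const _) hint₂, integral_const_mul, integral_const,
          probReal_univ, one_smul]
    _ ≤ √N / 2 + (2 * √N)⁻¹ * N := by gcongr; exact integral_sum_sq_le hf hf₁ horth
    _ = √N := by
        field_simp
        rw [Real.sq_sqrt (by positivity)]
        ring

theorem integral_abs_mul_sum_rpow_le [Nonempty ι] {p : ℝ} (hp : 1 ≤ p)
    (hf : ∀ i, AEStronglyMeasurable (f i) μ) (hf₁ : ∀ i x, |f i x| ≤ 1)
    (horth : ∀ i j, i ≠ j → ∫ x, f i x * f j x ∂μ = 0) {w : Ω → ℝ} (hw₁ : ∀ x, |w x| ≤ 1) :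
    ∫ x, |w x * ∑ i, f i x| ^ p ∂μ ≤ (Fintype.card ι : ℝ) ^ (p - 1) * √(Fintype.card ι) := by
  set N := (Fintype.card ι : ℝ)
  have hpoint (x : Ω) : |w x * ∑ i, f i x| ^ p ≤ N ^ (p - 1) * |∑ i, f i x| :=
    calc _ ≤ |∑ i, f i x| ^ p := by
          rw [abs_mul]
          gcongr
          exact mul_le_of_le_one_left (abs_nonneg _) (hw₁ x)
      _ = |∑ i, f i x| ^ (p - 1) * |∑ i, f i x| :=
        rpow_eq_rpow_sub_one_mul (by linarith) (abs_nonneg _)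
      _ ≤ N ^ (p - 1) * |∑ i, f i x| := by gcongr; exact abs_sum_le_card (hf₁ · x)
  calc _ ≤ ∫ x, N ^ (p - 1) * |∑ i, f i x| ∂μ :=
        integral_mono_of_nonneg (.of_forall fun x ↦ by positivity)
          ((integrable_apply_sum hf hf₁ continuous_abs).const_mul _) (.of_forall hpoint)
    _ ≤ N ^ (p - 1) * √N := by
        rw [integral_const_mul]
        gcongr
        exact integral_abs_sum_le hf hf₁ horth

end WeakLaw

variable [IsProbabilityMeasure μ] {p ε : ℝ} [Fact (1 ≤ ENNReal.ofReal p)] {r : ℕ → Ω → ℝ}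

theorem exists_norm_sum_smul_toLp_le (hr : ∀ k, AEStronglyMeasurable (r k) μ)
    (hr₁ : ∀ k x, |r k x| ≤ 1) (horth : ∀ i j, i ≠ j → ∫ x, r i x * r j x ∂μ = 0) {w : Ω → ℝ}
    (hw₁ : ∀ x, |w x| ≤ 1) (hwr : ∀ k, MemLp (fun x ↦ w x * r k x) (ENNReal.ofReal p) μ)
    (hε : 0 < ε) :
    ∃ N : ℕ, 0 < N ∧ ∀ s : Fin N → ℝ, (∀ k, |s k| ≤ 1) →
      ‖∑ k : Fin N, s k • (hwr k).toLp _‖ ≤ N * ε := by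
  have hp : 1 ≤ p := ENNReal.one_le_ofReal.1 Fact.out
  have hp₀ : 0 < p := by linarith
  obtain ⟨N, hN⟩ := exists_nat_gt ((ε ^ p)⁻¹ ^ 2)
  have hN₀ : 0 < N := by exact_mod_cast (sq_nonneg _).trans_lt hN
  have : NeZero N := ⟨hN₀.ne'⟩
  refine ⟨N, hN₀, fun s hs ↦ ?_⟩
  have hsr (k : Fin N) (x : Ω) : |s k * r k x| ≤ 1 := by
    rw [abs_mul]
    exact mul_le_one₀ (hs k) (abs_nonneg _) (hr₁ k x)
  have hsr_orth (i j : Fin N) (hij : i ≠ j) : ∫ x, s i * r i x * (s j * r j x) ∂μ = 0 := by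
    simp only [mul_mul_mul_comm (s i) _ (s j) _, integral_const_mul,
      horth i j (Fin.val_injective.ne hij), mul_zero]
  have hlarge : √N ≤ N * ε ^ p := by
    have : (ε ^ p)⁻¹ ≤ √N := Real.le_sqrt_of_sq_le hN.le
    calc √N = √N * ((ε ^ p)⁻¹ * ε ^ p) := by rw [inv_mul_cancel₀ (by positivity), mul_one]
      _ ≤ √N * (√N * ε ^ p) := by gcongr
      _ = N * ε ^ p := by rw [← mul_assoc, Real.mul_self_sqrt (by positivity)]
  rw [← Real.rpow_le_rpow_iff (norm_nonneg _) (by positivity) hp₀]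
  calc ‖∑ k : Fin N, s k • (hwr k).toLp _‖ ^ p = ∫ x, |w x * ∑ k : Fin N, s k * r k x| ^ p ∂μ := by
        rw [sum_smul_toLp (fun k : Fin N ↦ hwr k), norm_toLp_rpow_eq_integral hp₀]
        simp only [Real.norm_eq_abs, mul_sum, mul_left_comm]
    _ ≤ (N : ℝ) ^ (p - 1) * √N := by
        simpa only [Fintype.card_fin] using integral_abs_mul_sum_rpow_le hp
          (fun k : Fin N ↦ (hr k).const_mul (s k)) hsr hsr_orth hw₁
    _ ≤ (N : ℝ) ^ (p - 1) * (N * ε ^ p) := by gcongr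
    _ = (N * ε) ^ p := by
        rw [Real.mul_rpow (by positivity) hε.le,
          rpow_eq_rpow_sub_one_mul hp₀.ne' (by positivity : (0 : ℝ) ≤ N), mul_assoc]

-- Since `h` takes values in `{-1, 0, 1}`, `w = 1 - h ^ 2` is the indicator of its zero set.
theorem exists_nearlyScalarSplitting_sign (hr : ∀ k, AEStronglyMeasurable (r k) μ)
    (hr₁ : ∀ k x, |r k x| = 1) (horth : ∀ i j, i ≠ j → ∫ x, r i x * r j x ∂μ = 0) {h : Ω → ℝ}
    (hh : MemLp h (ENNReal.ofReal p) μ) (hh₁ : ∀ x, h x ∈ ({-1, 0, 1} : Set ℝ))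
    (hε : 0 < ε) :
    ∃ N : ℕ, 0 < N ∧ ∃ g : Fin N ⊕ Fin N → Lp ℝ (ENNReal.ofReal p) μ,
      (∀ q, ∀ᵐ x ∂μ, g q x = 1 ∨ g q x = -1) ∧
      NearlyScalarSplitting ε (hh.toLp h) fun q ↦ (2 * N : ℝ)⁻¹ • g q := by
  let w (x : Ω) : ℝ := 1 - h x ^ 2
  have hw₁ (x : Ω) : |w x| ≤ 1 := by
    rcases hh₁ x with hx | hx | (hx : h x = 1) <;> simp [w, hx]
  have hu (k : ℕ) : MemLp (fun x ↦ w x * r k x) (ENNReal.ofReal p) μ := by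
    refine .of_bound ((aestronglyMeasurable_const.sub (hh.1.pow 2)).mul (hr k)) 1
      (.of_forall fun x ↦ ?_)
    rw [norm_mul, Real.norm_eq_abs (r k x), hr₁, mul_one]
    exact hw₁ x
  obtain ⟨N, hN, hnorm⟩ := exists_norm_sum_smul_toLp_le hr (fun k x ↦ (hr₁ k x).le) horth hw₁ hu hε
  have : NeZero N := ⟨hN.ne'⟩
  have hsplit := NearlyScalarSplitting.of_reflections (x := hh.toLp h) (ε := ε)
    (u := fun k : Fin N ↦ (hu k).toLp _) (by simpa only [Fintype.card_fin] using hnorm)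
  rw [Fintype.card_fin] at hsplit
  refine ⟨N, hN, _, ?_, hsplit⟩
  have hsign {x : Ω} (k : ℕ) : h x + w x * r k x ∈ ({1, -1} : Set ℝ) ∧
      h x - w x * r k x ∈ ({1, -1} : Set ℝ) := by
    rcases hh₁ x with hx | hx | (hx : h x = 1) <;>
      rcases eq_or_eq_neg_of_abs_eq (hr₁ k x) with hr | hr <;> simp [w, hx, hr]
  rintro (k | k)
  · filter_upwards [(hh.add (hu k)).coeFn_toLp] with x hx
    rw [Sum.elim_inl, ← MemLp.toLp_add, hx]
    exact (hsign k).1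
  · filter_upwards [(hh.sub (hu k)).coeFn_toLp] with x hx
    rw [Sum.elim_inr, ← MemLp.toLp_sub, hx]
    exact (hsign k).2

end LpEstimates

section HaarSystem
open Filter Function Set Topology

namespace DyadicCoding

variable {Ω : Type*} [MeasurableSpace Ω] {μ : Measure Ω} (T : DyadicCoding μ) {f : Ω → ℝ} {k : ℕ}

theorem exists_eq_sum_haar (hf : f.FactorsThrough (T.addr k)) :
    ∃ a : ℕ → ℝ, ∀ x, f x = ∑ n ∈ Finset.range (2 ^ k), a n * T.haar n x := by
  induction k generalizing f with
  | zero =>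
    obtain ⟨φ, rfl⟩ := (factorsThrough_iff f).1 hf
    exact ⟨fun _ ↦ φ 1, fun x ↦ by simp [T.addr_zero, haar]⟩
  | succ k ih =>
    obtain ⟨φ, rfl⟩ := (factorsThrough_iff f).1 hf
    let mean (n : ℕ) : ℝ := (φ (2 * n) + φ (2 * n + 1)) / 2
    let slope (n : ℕ) : ℝ := (φ (2 * n) - φ (2 * n + 1)) / 2
    have hφ (x : Ω) : φ (T.addr (k + 1) x) =
        mean (T.addr k x) + slope (T.addr k x) * T.rademacher k x := by
      rw [rademacher, ← T.addr_succ_div_two k]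
      generalize T.addr (k + 1) x = m
      rcases Nat.even_or_odd' m with ⟨n, rfl | rfl⟩
      · rw [show 2 * n / 2 = n by omega, (even_two_mul n).neg_one_pow]
        ring
      · rw [show (2 * n + 1) / 2 = n by omega, (odd_two_mul_add_one n).neg_one_pow]
        ring
    obtain ⟨b, hb⟩ := ih (f := mean ∘ T.addr k) fun _ _ h ↦ congrArg mean h
    refine ⟨fun n ↦ if n < 2 ^ k then b n else slope n, fun x ↦ ?_⟩
    have haddr : ¬ T.addr k x < 2 ^ k := (Finset.mem_Ico.1 (T.addr_mem_Ico k x)).1.not_gt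
    rw [sum_range_two_pow_succ_haar, if_neg haddr, comp_apply, hφ]
    congr 1
    rw [← comp_apply (f := mean), hb]
    exact Finset.sum_congr rfl fun n hn ↦ by rw [if_pos (Finset.mem_range.1 hn)]

variable [IsFiniteMeasure μ]

theorem memLp_haar (q : ENNReal) (n : ℕ) : MemLp (T.haar n) q μ :=
  T.memLp_of_factorsThrough (T.haar_factorsThrough Nat.lt_two_pow_self) q

/-- The Haar functions as elements of `L^q`, still normalised in the supremum norm. -/
noncomputable def haarLp (q : ENNReal) (n : ℕ) : Lp ℝ q μ := (T.memLp_haar q n).toLp (T.haar n)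

theorem toLp_mem_span_haarLp {q : ENNReal} (hf : f.FactorsThrough (T.addr k)) :
    (T.memLp_of_factorsThrough hf q).toLp f ∈ Submodule.span ℝ (range (T.haarLp q)) := by
  obtain ⟨a, ha⟩ := T.exists_eq_sum_haar hf
  obtain rfl : f = _ := funext ha
  rw [← sum_smul_toLp (T.memLp_haar q)]
  exact Submodule.sum_mem _ fun n _ ↦ Submodule.smul_mem _ _ (Submodule.subset_span ⟨n, rfl⟩)

theorem exists_unconditionalWith_haarLp {p : ℝ} (hp : 1 < p) [Fact (1 ≤ ENNReal.ofReal p)] :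
    ∃ C, UnconditionalWith C (T.haarLp (ENNReal.ofReal p)) := by
  obtain ⟨C, hC, hle⟩ := T.exists_integral_abs_sum_haar_rpow_le hp
  have hp₀ : 0 < p := by linarith
  refine ⟨C ^ p⁻¹, unconditionalWith_of_range_two_pow fun a ε k hε ↦ ?_⟩
  rw [← Real.rpow_le_rpow_iff (norm_nonneg _) (by positivity) hp₀,
    Real.mul_rpow (by positivity) (norm_nonneg _), Real.rpow_inv_rpow hC hp₀.ne']
  simpa only [haarLp, sum_smul_toLp, norm_toLp_rpow_eq_integral hp₀, Real.norm_eq_abs]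
    using hle a ε k hε

theorem exists_biorthogonal_haarLp [NeZero μ] (q : ENNReal) [Fact (1 ≤ q)] :
    ∃ c : ℕ → Lp ℝ q μ →L[ℝ] ℝ, ∀ m n, c m (T.haarLp q n) = if m = n then 1 else 0 := by
  have : Fact (1 ≤ q.conjExponent) := ⟨le_self_add⟩
  have : q.HolderConjugate q.conjExponent := .conjExponent Fact.out
  exact exists_biorthogonal_toLp (T.memLp_haar q) (T.memLp_haar q.conjExponent)
    (fun _ _ ↦ T.integral_haar_mul_haar) fun n ↦ (T.integral_haar_mul_self_pos n).ne'

theorem dense_span_haarLp_of_tendsto [TopologicalSpace Ω] [NormalSpace Ω] [BorelSpace Ω]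
    [μ.WeaklyRegular] {q : ENNReal} [Fact (1 ≤ q)] (hq : q ≠ ⊤) {z : ℕ → ℕ → Ω}
    (hz : ∀ᵐ x ∂μ, Tendsto (fun k ↦ z k (T.addr k x)) atTop (𝓝 x)) :
    Dense (Submodule.span ℝ (range (T.haarLp q)) : Set (Lp ℝ q μ)) := by
  have hmem (g : BoundedContinuousFunction Ω ℝ) : BoundedContinuousFunction.toLp q μ ℝ g ∈
      closure (Submodule.span ℝ (range (T.haarLp q)) : Set (Lp ℝ q μ)) := by
    let s (k : ℕ) (x : Ω) : ℝ := g (z k (T.addr k x))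
    have hs (k : ℕ) : (s k).FactorsThrough (T.addr k) := fun _ _ h ↦ congrArg (g ∘ z k) h
    have hsL (k : ℕ) : MemLp (s k) q μ := T.memLp_of_factorsThrough (hs k) q
    have hgL : MemLp g q μ :=
      .of_bound g.continuous.aestronglyMeasurable ‖g‖ (.of_forall g.norm_coe_le_norm)
    have hg : BoundedContinuousFunction.toLp q μ ℝ g = hgL.toLp g :=
      Lp.ext ((BoundedContinuousFunction.coeFn_toLp (p := q) μ ℝ g).trans hgL.coeFn_toLp.symm)
    have hui : UnifIntegrable s q μ :=
      unifIntegrable_of Fact.out hq (fun k ↦ (hsL k).1) fun ε _ ↦ ⟨‖g‖₊ + 1, fun k ↦ by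
        have hempty : {x | ‖g‖₊ + 1 ≤ ‖s k x‖₊} = ∅ :=
          eq_empty_of_forall_notMem fun x hx ↦
            (hx.trans (g.nnnorm_coe_le_nnnorm _)).not_gt (lt_add_one _)
        simp [hempty]⟩
    have hlim : Tendsto (fun k ↦ (hsL k).toLp (s k)) atTop (𝓝 (hgL.toLp g)) :=
      (Lp.tendsto_Lp_iff_tendsto_eLpNorm'' s hsL g hgL).2 <|
        tendsto_Lp_finite_of_tendsto_ae Fact.out hq (fun k ↦ (hsL k).1) hgL hui
          (hz.mono fun x hx ↦ (g.continuous.tendsto x).comp hx)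
    rw [hg]
    exact mem_closure_of_tendsto hlim (.of_forall fun k ↦ T.toLp_mem_span_haarLp (hs k))
  exact fun f ↦ isClosed_closure.closure_subset_iff.2 (range_subset_iff.2 hmem)
    (BoundedContinuousFunction.toLp_denseRange (p := q) ℝ μ ℝ hq f)

end DyadicCoding
end HaarSystem

section UnitInterval
open Filter Set Topology

theorem preimage_floor_fract_inter_Ico {k n : ℕ} (hn : n ∈ Finset.Ico (2 ^ k) (2 ^ (k + 1))) :
    (fun x : ℝ ↦ ⌊2 ^ k * (1 + Int.fract x)⌋₊) ⁻¹' {n} ∩ Ico 0 1 =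
      Ico (n / 2 ^ k - 1 : ℝ) ((n + 1) / 2 ^ k - 1) := by
  have hpos : (0 : ℝ) < 2 ^ k := by positivity
  obtain ⟨hn₁, hn₂⟩ := Finset.mem_Ico.1 hn
  have hleft : (0 : ℝ) ≤ n / 2 ^ k - 1 := by
    rw [sub_nonneg, one_le_div hpos]
    exact_mod_cast hn₁
  have hright : (n + 1 : ℝ) / 2 ^ k - 1 ≤ 1 := by
    rw [sub_le_iff_le_add, div_le_iff₀ hpos, one_add_one_eq_two, ← pow_succ']
    exact_mod_cast hn₂
  ext x
  have hfloor (hx : x ∈ Ico (0 : ℝ) 1) : ⌊2 ^ k * (1 + Int.fract x)⌋₊ = n ↔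
      x ∈ Ico (n / 2 ^ k - 1 : ℝ) ((n + 1) / 2 ^ k - 1) := by
    rw [Int.fract_eq_self.2 hx, Nat.floor_eq_iff (mul_nonneg hpos.le (by linarith [hx.1])), mem_Ico,
      sub_le_iff_le_add', lt_sub_iff_add_lt', div_le_iff₀' hpos, lt_div_iff₀' hpos]
  refine ⟨fun ⟨h, hx⟩ ↦ (hfloor hx).1 h, fun h ↦ ?_⟩
  have hx : x ∈ Ico (0 : ℝ) 1 := ⟨hleft.trans h.1, h.2.trans_le hright⟩
  exact ⟨(hfloor hx).2 h, hx⟩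

/-- The coding of `[0,1)` by binary digits: `addr k x` has binary expansion `1` followed by the
first `k` digits of `x`. The fractional part extends it to all of `ℝ`. -/
noncomputable def unitIntervalCoding : DyadicCoding (volume.restrict (Icc (0 : ℝ) 1)) where
  addr k x := ⌊2 ^ k * (1 + Int.fract x)⌋₊
  measurable_addr k := Nat.measurable_floor.comp (by fun_prop)
  addr_zero x := by
    rw [Nat.floor_eq_iff (by positivity)]
    constructor <;> push_cast <;> linarith [Int.fract_nonneg x, Int.fract_lt_one x]
  addr_succ_div_two k x := by
    rw [← Nat.floor_div_natCast, pow_succ]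
    congr 1
    push_cast
    ring
  measureReal_fiber n hn := by
    have hmem : n ∈ Finset.Ico (2 ^ Nat.log 2 n) (2 ^ (Nat.log 2 n + 1)) :=
      Finset.mem_Ico.2 ⟨Nat.pow_log_le_self 2 hn, Nat.lt_pow_succ_log_self one_lt_two n⟩
    rw [← restrict_Ico_eq_restrict_Icc, measureReal_restrict_apply' measurableSet_Ico,
      preimage_floor_fract_inter_Ico hmem, Real.volume_real_Ico_of_le (by gcongr; simp)]
    ring

theorem ae_tendsto_unitIntervalCoding_addr : ∀ᵐ x ∂volume.restrict (Icc (0 : ℝ) 1),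
    Tendsto (fun k ↦ (unitIntervalCoding.addr k x : ℝ) / 2 ^ k - 1) atTop (𝓝 x) := by
  have hIco : ∀ᵐ x ∂volume.restrict (Icc (0 : ℝ) 1), x ∈ Ico (0 : ℝ) 1 := by
    rw [← restrict_Ico_eq_restrict_Icc]
    exact ae_restrict_mem measurableSet_Ico
  filter_upwards [hIco] with x hx
  have hfloor := (tendsto_nat_floor_mul_div_atTop (by linarith [hx.1] : 0 ≤ 1 + x)).comp
    (tendsto_pow_atTop_atTop_of_one_lt (one_lt_two : (1 : ℝ) < 2))
  simpa [unitIntervalCoding, Int.fract_eq_self.2 hx, mul_comm, Function.comp_def]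
    using hfloor.sub_const 1

end UnitInterval

theorem stmt6_general {Ω : Type*} [MeasurableSpace Ω] {μ : Measure Ω} [IsProbabilityMeasure μ]
    (T : DyadicCoding μ) {p : ℝ} (hp : 1 < p) [Fact (1 ≤ ENNReal.ofReal p)]
    (hdense : Dense (Submodule.span ℝ (Set.range (T.haarLp (ENNReal.ofReal p))) :
      Set (Lp ℝ (ENNReal.ofReal p) μ))) :
    ∃ (g : ℕ → Lp ℝ (ENNReal.ofReal p) μ) (gs : ℕ → Lp ℝ (ENNReal.ofReal p) μ →L[ℝ] ℝ),
      (∀ j, ∀ᵐ t ∂μ, g j t = 1 ∨ g j t = -1) ∧ ∀ f, HasSum (fun j ↦ gs j f • g j) f := by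
  obtain ⟨C, hC⟩ := T.exists_unconditionalWith_haarLp hp
  obtain ⟨c, hc⟩ := T.exists_biorthogonal_haarLp (ENNReal.ofReal p)
  let ε (n : ℕ) : ℝ := (1 / 2) ^ n / (‖c n‖ + 1)
  have hε : Summable fun n ↦ ‖c n‖ * ε n := by
    refine .of_nonneg_of_le (fun n ↦ by positivity) (fun n ↦ ?_) summable_geometric_two
    rw [mul_div_left_comm]
    exact mul_le_of_le_one_right (by positivity) (div_le_one_of_le₀ (by simp) (by positivity))
  choose N hN g hg hsplit using fun n ↦ exists_nearlyScalarSplitting_sign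
    (fun k ↦ (T.measurable_rademacher k).aestronglyMeasurable) T.abs_rademacher
    (fun _ _ ↦ T.integral_rademacher_mul_rademacher) (T.memLp_haar (ENNReal.ofReal p) n)
    (T.haar_mem n) (by positivity : 0 < ε n)
  have (n : ℕ) : NeZero (N n) := ⟨(hN n).ne'⟩
  obtain ⟨φ⟩ := nonempty_equiv_of_countable (α := ℕ) (β := Σ n, Fin (N n) ⊕ Fin (N n))
  refine ⟨fun j ↦ g (φ j).1 (φ j).2, fun j ↦ (2 * N (φ j).1 : ℝ)⁻¹ • c (φ j).1,
    fun j ↦ hg _ _, fun f ↦ ?_⟩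
  have hsum := hasSum_sigma_smul_of_nearlyScalarSplitting hc hC hdense hsplit hε f
  simpa only [Function.comp_def, smul_apply, smul_eq_mul, smul_smul, mul_comm]
    using φ.hasSum_iff.2 hsum

/-- For every `p > 1` there exist `{-1,+1}`-valued functions `g_j` on
`[0,1]` and bounded linear functionals `g_j*` on `L^p[0,1]` such that every
`f ∈ L^p[0,1]` admits the unconditionally convergent expansion
`f = ∑_j g_j*(f) g_j`. -/
theorem stmt6 (p : ℝ) (hp : 1 < p) [Fact (1 ≤ ENNReal.ofReal p)] :
    ∃ (g : ℕ → Lp ℝ (ENNReal.ofReal p) (volume.restrict (Set.Icc (0:ℝ) 1)))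
      (gs : ℕ → Lp ℝ (ENNReal.ofReal p) (volume.restrict (Set.Icc (0:ℝ) 1)) →L[ℝ] ℝ),
      (∀ j, ∀ᵐ t ∂(volume.restrict (Set.Icc (0:ℝ) 1)), g j t = 1 ∨ g j t = -1) ∧
      ∀ f, HasSum (fun j => gs j f • g j) f :=
  have : IsProbabilityMeasure (volume.restrict (Set.Icc (0 : ℝ) 1)) := ⟨by simp⟩
  stmt6_general unitIntervalCoding hp
    (unitIntervalCoding.dense_span_haarLp_of_tendsto (z := fun k n ↦ n / 2 ^ k - 1)
      ENNReal.ofReal_ne_top ae_tendsto_unitIntervalCoding_addr)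
end
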